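/- Let n ≥ 2 be a natural number such that n is not a power of a prime and not twice a power of a prime (i.e., for every prime p and every k ≥ 1, n ≠ p^k and n ≠ 2·p^k). Then the Schwartz genus of the quotient covering map q_n : F(ℂ,n) → F(ℂ,n)/Σ_n is strictly less than n; that is, there exist n−1 open subsets U_1, …, U_{n−1} covering F(ℂ,n)/Σ_n such that for each i the restriction of q_n over U_i is a trivial covering: there is a discrete topological space D_i and a homeomorphism h_i : q_n^{-1}(U_i) → U_i × D_i with pr₁ ∘ h_i = q_n on q_n^{-1}(U_i). -/

import Mathlib

noncomputable section

/-- The ordered configuration space of `n` distinct points in the plane `ℂ`. -/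
abbrev ConfigSpace (n : ℕ) : Type := { f : Fin n → ℂ // Function.Injective f }

/-- The action of a permutation `σ` on the configuration space, `σ • f = f ∘ σ⁻¹`. -/
def configPermMap (n : ℕ) (σ : Equiv.Perm (Fin n)) : ConfigSpace n → ConfigSpace n :=
  fun f => ⟨f.1 ∘ ⇑σ⁻¹, f.2.comp (Equiv.injective _)⟩

/-- The orbit equivalence relation of the `Σ_n`-action on `F(ℂ,n)`. -/
def configSetoid (n : ℕ) : Setoid (ConfigSpace n) where
  r x y := ∃ σ : Equiv.Perm (Fin n), configPermMap n σ x = y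
  iseqv := by
    constructor
    · intro x
      exact ⟨1, Subtype.ext (by funext i; simp [configPermMap])⟩
    · rintro x y ⟨σ, rfl⟩
      exact ⟨σ⁻¹, Subtype.ext (by funext i; simp [configPermMap])⟩
    · rintro x y z ⟨σ, rfl⟩ ⟨τ, rfl⟩
      exact ⟨τ * σ, Subtype.ext (by funext i; simp [configPermMap, mul_inv_rev])⟩

/-- The quotient `F(ℂ,n)/Σ_n`, with the quotient topology. -/
abbrev ConfigQuotient (n : ℕ) : Type := Quotient (configSetoid n)

/-- The quotient (covering) map `q_n : F(ℂ,n) → F(ℂ,n)/Σ_n`. -/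
def configProj (n : ℕ) : ConfigSpace n → ConfigQuotient n := Quotient.mk _

/-- The assertion that the Schwartz genus of the covering `q_n : F(ℂ,n) → F(ℂ,n)/Σ_n` is
at most `t`: there are `t` open sets covering the base, over each of which `q_n` is a
trivial covering (i.e. the preimage is homeomorphic, over the base, to a product of the
open set with a discrete space). -/
def SchwartzGenusLE (n t : ℕ) : Prop :=
  ∃ U : Fin t → Set (ConfigQuotient n),
    (∀ i, IsOpen (U i)) ∧ (⋃ i, U i) = Set.univ ∧
      ∀ i : Fin t, ∃ (D : Type) (τ : TopologicalSpace D),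
        @DiscreteTopology D τ ∧
          ∃ e : @Homeomorph { x : ConfigSpace n // configProj n x ∈ U i } (↥(U i) × D)
              inferInstance (@instTopologicalSpaceProd _ _ _ τ),
            ∀ x, ((e.toEquiv x).1 : ConfigQuotient n) = configProj n x.1

/-! A cover of the base by `n - 1` trivialising open sets amounts to an equivariant map from the
configuration space to the join of `n - 1` copies of `Σ_n`. The configuration space maps
equivariantly to the order complex of the poset of Fox–Neuwirth strata, which has dimension `n - 1`,
and the join is `(n - 3)`-connected, so only the strata of the two highest codimensions obstruct.

Below these two codimensions, sending a stratum to its codimension and to the order of the points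
gives an equivariant map `u`. Each nonempty proper subset `T` of the set of points splits the points
into two colours and yields a map `t_T` to the join defined on the whole order complex. Every `t_T`
is homotopic to `u` where `u` is defined, and `Σ_n` permutes the `t_T`. As `n` is not a prime power,
the binomial coefficients `n.choose k`, `0 < k < n`, have greatest common divisor `1`, so some
integers `w k` give `∑ T, w T.card = 1`. An affine combination of the `t_T` with these coefficients,
formed in the abelianised fundamental groups that classify the extensions of `u` up to homotopy, is
invariant, and it singles out an extension that is equivariant.
-/

namespace SchwartzGenus

open scoped Pointwise

attribute [local instance] arrowAction

/-! ### Binomial coefficients and weighted subsets -/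

theorem exists_sum_mul_choose_eq_one {n : ℕ} (hn : 1 < n) (hpp : ¬ IsPrimePow n) :
    ∃ w : ℕ → ℤ, ∑ k ∈ Finset.Ioo 0 n, w k * n.choose k = 1 := by
  obtain ⟨w, hw⟩ := (Finset.Icc 1 (n - 1)).gcd_eq_sum_mul fun k => (n.choose k : ℤ)
  have hIcc : Finset.Icc 1 (n - 1) = Finset.Ioo 0 n := by
    ext k
    simp only [Finset.mem_Icc, Finset.mem_Ioo]
    omega
  have hgcd : (Finset.Icc 1 (n - 1)).gcd (fun k => (n.choose k : ℤ)) = 1 := by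
    obtain ⟨d, hd⟩ := Int.eq_ofNat_of_zero_le (Finset.Int.finsetGcd_nonneg
      (s := Finset.Icc 1 (n - 1)) (f := fun k => (n.choose k : ℤ)))
    have hdvd : d ∣ (Finset.Icc 1 (n - 1)).gcd n.choose :=
      Finset.dvd_gcd fun k hk => Int.natCast_dvd_natCast.1 (hd ▸ Finset.gcd_dvd hk)
    rw [Choose.gcd_choose_eq_one_of_not_isPrimePow hn hpp, Nat.dvd_one] at hdvd
    rw [hd, hdvd, Nat.cast_one]
  refine ⟨w, ?_⟩
  rw [← hgcd, hw, hIcc]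
  exact Finset.sum_congr rfl fun _ _ => mul_comm _ _

/-- The nonempty proper subsets of `Fin n`, with the action of the symmetric group. -/
def properSubsets (n : ℕ) : SubMulAction (Equiv.Perm (Fin n)) (Finset (Fin n)) where
  carrier := {T | T.Nonempty ∧ T ≠ Finset.univ}
  smul_mem' g _ hT :=
    ⟨hT.1.smul_finset, fun h => hT.2 <| by
      rwa [smul_eq_iff_eq_inv_smul, Finset.smul_finset_univ] at h⟩

theorem card_mem_Ioo_of_mem_properSubsets {n : ℕ} {T : Finset (Fin n)}
    (hT : T ∈ properSubsets n) : T.card ∈ Finset.Ioo 0 n := by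
  rw [Finset.mem_Ioo]
  exact ⟨hT.1.card_pos, by simpa using Finset.card_lt_card (Finset.ssubset_univ_iff.2 hT.2)⟩

instance (n : ℕ) : Fintype (properSubsets n) :=
  Fintype.ofFinite _

theorem sum_properSubsets_card (n : ℕ) (w : ℕ → ℤ) :
    ∑ T : properSubsets n, w T.1.card = ∑ k ∈ Finset.Ioo 0 n, w k * n.choose k := by
  classical
  let w' : ℕ → ℤ := fun k => if k ∈ Finset.Ioo 0 n then w k else 0
  have hproper : ∀ T : Finset (Fin n), T ∈ properSubsets n ↔ T.card ∈ Finset.Ioo 0 n := by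
    refine fun T => ⟨card_mem_Ioo_of_mem_properSubsets, fun h => ?_⟩
    rw [Finset.mem_Ioo] at h
    exact ⟨Finset.card_pos.1 h.1, by rintro rfl; simp at h⟩
  calc ∑ T : properSubsets n, w T.1.card
      = ∑ T : Finset (Fin n), w' T.card := by
        rw [← Finset.sum_subtype (Finset.univ.filter (· ∈ properSubsets n)) (by simp)
          (fun T : Finset (Fin n) => w T.card), Finset.sum_filter]
        exact Finset.sum_congr rfl fun T _ => by simp only [w', hproper T]
    _ = ∑ k ∈ Finset.range (n + 1), n.choose k • w' k := by
        simpa using Finset.sum_powerset_apply_card w' (x := (Finset.univ : Finset (Fin n)))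
    _ = ∑ k ∈ Finset.Ioo 0 n, w k * n.choose k := by
        rw [← Finset.sum_subset (s₁ := Finset.Ioo 0 n)]
        · exact Finset.sum_congr rfl fun k hk => by simp [w', Finset.mem_Ioo.1 hk, mul_comm]
        · exact fun k hk => Finset.mem_range.2 ((Finset.mem_Ioo.1 hk).2.trans n.lt_succ_self)
        · exact fun k _ hk => by simp only [w', if_neg hk, smul_zero]

theorem exists_weights_properSubsets {n : ℕ} (hn : 1 < n) (hpp : ¬ IsPrimePow n) :
    ∃ w : ℕ → ℤ, ∑ T : properSubsets n, w T.1.card = 1 := by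
  simpa only [sum_properSubsets_card] using exists_sum_mul_choose_eq_one hn hpp

/-! ### Fox–Neuwirth strata -/

section Sorting

variable {n : ℕ} (r : Fin n → Fin n → Prop) [IsStrictTotalOrder (Fin n) r]

theorem ncard_setOf_rel_injective : Function.Injective fun i => {j | r j i}.ncard := by
  have hlt : ∀ {i j}, r i j → {k | r k i}.ncard < {k | r k j}.ncard := fun {i j} hij =>
    Set.ncard_lt_ncard ((Set.ssubset_iff_of_subset fun _ hki => trans_of r hki hij).2
      ⟨i, hij, irrefl_of r i⟩)
  intro i j hij
  rcases trichotomous_of r i j with h | h | h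
  · exact absurd hij (hlt h).ne
  · exact h
  · exact absurd hij (hlt h).ne'

theorem ncard_setOf_rel_lt (i : Fin n) : {j | r j i}.ncard < n := by
  simpa using Set.ncard_lt_card (s := {j | r j i}) fun h =>
    irrefl_of r i (Set.eq_univ_iff_forall.1 h i)

/-- The permutation listing `Fin n` in the increasing order of a strict total order. -/
def sortPerm : Equiv.Perm (Fin n) :=
  (Equiv.ofBijective (fun i => (⟨_, ncard_setOf_rel_lt r i⟩ : Fin n))
    (Finite.injective_iff_bijective.1 fun _ _ h =>
      ncard_setOf_rel_injective r (congrArg Fin.val h))).symm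

theorem sortPerm_eq_mul (g : Equiv.Perm (Fin n)) (r' : Fin n → Fin n → Prop)
    [IsStrictTotalOrder (Fin n) r'] (hr' : ∀ i j, r' i j ↔ r (g⁻¹ i) (g⁻¹ j)) :
    sortPerm r' = g * sortPerm r := by
  have hcard : ∀ i, {j | r' j i}.ncard = {j | r j (g⁻¹ i)}.ncard := fun i => by
    simp only [hr']
    exact Set.ncard_preimage_of_injective_subset_range (f := ⇑g⁻¹) (s := {j | r j (g⁻¹ i)})
      g⁻¹.injective fun j _ => g⁻¹.surjective j
  rw [← inv_inj, mul_inv_rev]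
  ext i
  exact hcard i

end Sorting

/-- A Fox–Neuwirth stratum of the configuration space of `n` points in the plane: `left i j` says
that the `i`-th point lies strictly to the left of the `j`-th one, and `lt` orders the points by
columns from left to right and, inside a column, from bottom to top. -/
@[ext]
structure Stratum (n : ℕ) where
  lt : Fin n → Fin n → Prop
  left : Fin n → Fin n → Prop
  isStrictTotalOrder : IsStrictTotalOrder (Fin n) lt
  lt_of_left : ∀ {i j}, left i j → lt i j
  left_or_left : ∀ {i k} (j), left i k → left i j ∨ left j k

namespace Stratum

variable {n : ℕ} {q q' : Stratum n} {i j k : Fin n}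

instance (q : Stratum n) : IsStrictTotalOrder (Fin n) q.lt :=
  q.isStrictTotalOrder

instance : Finite (Stratum n) :=
  Finite.of_injective (fun q => (q.lt, q.left)) fun _ _ h =>
    Stratum.ext (Prod.ext_iff.1 h).1 (Prod.ext_iff.1 h).2

instance : Fintype (Stratum n) :=
  Fintype.ofFinite _

/-- `q.below i j`: the `i`-th point lies in the same column as the `j`-th one, and below it. -/
def below (q : Stratum n) (i j : Fin n) : Prop :=
  q.lt i j ∧ ¬ q.left i j

/-- `q.SameColumn i j`: the `i`-th and the `j`-th point lie on a common vertical line. -/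
def SameColumn (q : Stratum n) (i j : Fin n) : Prop :=
  ¬ q.left i j ∧ ¬ q.left j i

theorem not_left_of_lt (h : q.lt i j) : ¬ q.left j i :=
  fun h' => asymm_of q.lt h (q.lt_of_left h')

theorem lt_iff_left_or_below : q.lt i j ↔ q.left i j ∨ q.below i j :=
  ⟨fun h => or_iff_not_imp_left.2 fun h' => ⟨h, h'⟩, fun h => h.elim q.lt_of_left And.left⟩

theorem below.sameColumn (h : q.below i j) : q.SameColumn i j :=
  ⟨h.2, not_left_of_lt h.1⟩

theorem SameColumn.refl (q : Stratum n) (i : Fin n) : q.SameColumn i i :=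
  ⟨fun h => irrefl_of q.lt i (q.lt_of_left h), fun h => irrefl_of q.lt i (q.lt_of_left h)⟩

theorem SameColumn.symm (h : q.SameColumn i j) : q.SameColumn j i :=
  ⟨h.2, h.1⟩

theorem SameColumn.trans (h : q.SameColumn i j) (h' : q.SameColumn j k) : q.SameColumn i k :=
  ⟨fun hik => (q.left_or_left j hik).elim h.1 h'.1,
    fun hki => (q.left_or_left j hki).elim h'.2 h.2⟩

theorem SameColumn.below_or_below (h : q.SameColumn i j) (hij : i ≠ j) :
    q.below i j ∨ q.below j i := by
  rcases trichotomous_of q.lt i j with hlt | heq | hgt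
  · exact Or.inl ⟨hlt, h.1⟩
  · exact absurd heq hij
  · exact Or.inr ⟨hgt, h.2⟩

instance : PartialOrder (Stratum n) where
  le q q' := (∀ i j, q'.left i j → q.left i j) ∧ (∀ i j, q.below i j → q'.below i j)
  le_refl _ := ⟨fun _ _ h => h, fun _ _ h => h⟩
  le_trans _ _ _ h h' :=
    ⟨fun _ _ hl => h.1 _ _ (h'.1 _ _ hl), fun _ _ hb => h'.2 _ _ (h.2 _ _ hb)⟩
  le_antisymm q q' h h' := by
    have hleft : ∀ i j, q.left i j ↔ q'.left i j := fun i j => ⟨h'.1 i j, h.1 i j⟩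
    have hbelow : ∀ i j, q.below i j ↔ q'.below i j := fun i j => ⟨h.2 i j, h'.2 i j⟩
    ext i j
    · rw [lt_iff_left_or_below, lt_iff_left_or_below, hleft, hbelow]
    · exact hleft i j

theorem sameColumn_mono (h : q ≤ q') (hij : q.SameColumn i j) : q'.SameColumn i j :=
  ⟨fun hl => hij.1 (h.1 _ _ hl), fun hl => hij.2 (h.1 _ _ hl)⟩

instance : MulAction (Equiv.Perm (Fin n)) (Stratum n) where
  smul g q :=
    { lt := fun i j => q.lt (g⁻¹ i) (g⁻¹ j)
      left := fun i j => q.left (g⁻¹ i) (g⁻¹ j)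
      isStrictTotalOrder := g⁻¹.injective.isStrictTotalOrder_onFun (r := q.lt)
      lt_of_left := fun h => q.lt_of_left h
      left_or_left := fun j h => q.left_or_left (g⁻¹ j) h }
  one_smul _ := rfl
  mul_smul _ _ _ := rfl

theorem smul_lt_iff (g : Equiv.Perm (Fin n)) :
    (g • q).lt i j ↔ q.lt (g⁻¹ i) (g⁻¹ j) :=
  Iff.rfl

theorem smul_left_iff (g : Equiv.Perm (Fin n)) :
    (g • q).left i j ↔ q.left (g⁻¹ i) (g⁻¹ j) :=
  Iff.rfl

theorem smul_sameColumn_iff (g : Equiv.Perm (Fin n)) :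
    (g • q).SameColumn i j ↔ q.SameColumn (g⁻¹ i) (g⁻¹ j) :=
  Iff.rfl

theorem smul_le_smul (g : Equiv.Perm (Fin n)) (h : q ≤ q') : g • q ≤ g • q' :=
  ⟨fun _ _ hl => h.1 _ _ hl, fun _ _ hb => h.2 _ _ hb⟩

section Colouring

variable {κ : Type*} (s : Fin n → κ)

/-- The points having a point of the same colour below them in their column. -/
def covered (q : Stratum n) : Set (Fin n) :=
  {i | ∃ j, s j = s i ∧ q.below j i}

/-- The number of points of a coloured stratum that are not the lowest point of their colour in
their column. For a constant colouring this is the codimension of the stratum. -/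
def colourRank (q : Stratum n) : ℕ :=
  (q.covered s).ncard

variable {s}

theorem covered_mono (h : q ≤ q') : q.covered s ⊆ q'.covered s := fun i hi => by
  obtain ⟨j, hs, hb⟩ := hi
  exact ⟨j, hs, h.2 _ _ hb⟩

theorem exists_forall_not_below (q : Stratum n) {P : Fin n → Prop} (hi : P i) :
    ∃ k, P k ∧ ∀ j, P j → ¬ q.below j k := by
  obtain ⟨k, hk, hmin⟩ := (Finite.wellFounded_of_trans_of_irrefl q.lt).has_min {i | P i} ⟨i, hi⟩
  exact ⟨k, hk, fun j hj hb => hmin j hj hb.1⟩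

theorem exists_sameColumn_notMem_covered (q : Stratum n) (s : Fin n → κ) (i : Fin n) :
    ∃ k, s k = s i ∧ q.SameColumn k i ∧ k ∉ q.covered s := by
  obtain ⟨k, ⟨hs, hc⟩, hmin⟩ := q.exists_forall_not_below
    (P := fun k => s k = s i ∧ q.SameColumn k i) ⟨rfl, SameColumn.refl q i⟩
  refine ⟨k, hs, hc, fun hk => ?_⟩
  obtain ⟨j, hj, hb⟩ := hk
  exact hmin j ⟨hj.trans hs, hb.sameColumn.trans hc⟩ hb

/-- Passing to a larger stratum merges columns, and equality of the colour ranks means that no two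
nonempty parts of the same colour are merged. -/
theorem below_of_colourRank_eq (h : q ≤ q') (hc : q.colourRank s = q'.colourRank s)
    (hs : s i = s j) (hij : q'.below i j) : q.below i j := by
  have hcov : q.covered s = q'.covered s :=
    Set.eq_of_subset_of_ncard_le (covered_mono h) hc.ge
  obtain ⟨k, hk, hki, hk'⟩ := exists_sameColumn_notMem_covered q s i
  obtain ⟨l, hl, hlj, hl'⟩ := exists_sameColumn_notMem_covered q s j
  rw [hcov] at hk' hl'
  have hkl : q'.SameColumn k l :=
    ((sameColumn_mono h hki).trans hij.sameColumn).trans (sameColumn_mono h hlj).symm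
  have heq : k = l := by
    by_contra hne
    rcases hkl.below_or_below hne with hb | hb
    · exact hl' (⟨k, by rw [hk, hl, hs], hb⟩)
    · exact hk' (⟨l, by rw [hk, hl, hs], hb⟩)
  subst heq
  have hne : i ≠ j := by
    rintro rfl
    exact irrefl_of q'.lt i hij.1
  refine ((hki.symm.trans hlj).below_or_below hne).resolve_right fun hb => ?_
  exact asymm_of q'.lt hij.1 (h.2 _ _ hb).1

theorem colourRank_smul (g : Equiv.Perm (Fin n)) (s : Fin n → κ) (q : Stratum n) :
    (g • q).colourRank (g • s) = q.colourRank s := by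
  have hcov : (g • q).covered (g • s) = ⇑g⁻¹ ⁻¹' q.covered s := by
    ext i
    exact (g⁻¹.surjective.exists (p := fun j => s j = s (g⁻¹ i) ∧ q.below j (g⁻¹ i))).symm
  rw [colourRank, hcov]
  exact Set.ncard_preimage_of_injective_subset_range g⁻¹.injective fun j _ => g⁻¹.surjective j

theorem colourRank_add_ncard_le (q : Stratum n) {A : Set (Fin n)} (hA : A.InjOn s) :
    q.colourRank s + A.ncard ≤ n := by
  choose f hf using fun i => q.exists_forall_not_below (P := fun k => s k = s i) (i := i) rfl
  have hinj : A.InjOn f := fun i hi j hj hij =>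
    hA hi hj ((hf i).1.symm.trans ((congrArg s hij).trans (hf j).1))
  have hdisj : Disjoint (q.covered s) (f '' A) := by
    rw [Set.disjoint_left]
    rintro _ ⟨j, hs, hb⟩ ⟨a, -, rfl⟩
    exact (hf a).2 j (hs.trans (hf a).1) hb
  rw [colourRank, ← hinj.ncard_image, ← Set.ncard_union_eq hdisj]
  simpa using Set.ncard_le_card (q.covered s ∪ f '' A)

variable [LinearOrder κ]

/-- The order of the points by colour first, and by position inside a colour. -/
def colourLT (s : Fin n → κ) (q : Stratum n) (i j : Fin n) : Prop :=
  s i < s j ∨ s i = s j ∧ q.lt i j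

instance (s : Fin n → κ) (q : Stratum n) : IsStrictTotalOrder (Fin n) (colourLT s q) where
  irrefl i := fun h => h.elim (lt_irrefl _) fun h => irrefl_of q.lt i h.2
  trans i j k := by
    rintro (h | ⟨h, hq⟩) (h' | ⟨h', hq'⟩)
    · exact Or.inl (h.trans h')
    · exact Or.inl (h.trans_eq h')
    · exact Or.inl (h.trans_lt h')
    · exact Or.inr ⟨h.trans h', trans_of q.lt hq hq'⟩
  trichotomous i j hij hji := by
    have hs : s i = s j :=
      le_antisymm (not_lt.1 fun h => hji (Or.inl h)) (not_lt.1 fun h => hij (Or.inl h))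
    exact (trichotomous_of q.lt i j).elim (fun h => absurd (Or.inr ⟨hs, h⟩) hij) fun h =>
      h.elim id fun h => absurd (Or.inr ⟨hs.symm, h⟩) hji

/-- The labelling of the points in the order of `colourLT`. -/
def colourPerm (s : Fin n → κ) (q : Stratum n) : Equiv.Perm (Fin n) :=
  sortPerm (colourLT s q)

theorem colourPerm_eq (h : q ≤ q') (hc : q.colourRank s = q'.colourRank s) :
    q.colourPerm s = q'.colourPerm s := by
  have hle : ∀ i j, colourLT s q' i j → colourLT s q i j := by
    simp only [colourLT, lt_iff_left_or_below]
    rintro i j (hs | ⟨hs, hl | hb⟩)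
    · exact Or.inl hs
    · exact Or.inr ⟨hs, Or.inl (h.1 _ _ hl)⟩
    · exact Or.inr ⟨hs, Or.inr (below_of_colourRank_eq h hc hs hb)⟩
  rw [← one_mul (q'.colourPerm s)]
  refine sortPerm_eq_mul _ 1 _ fun i j => ⟨fun hij => ?_, hle i j⟩
  rcases trichotomous_of (colourLT s q') i j with h' | rfl | h'
  · exact h'
  · exact absurd hij (irrefl_of _ i)
  · exact absurd hij (asymm_of _ (hle _ _ h'))

theorem colourPerm_smul (g : Equiv.Perm (Fin n)) (s : Fin n → κ) (q : Stratum n) :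
    (g • q).colourPerm (g • s) = g * q.colourPerm s :=
  sortPerm_eq_mul _ g _ fun _ _ => Iff.rfl

end Colouring

/-- The codimension of a stratum, i.e. `n` minus its number of columns. -/
def codim (q : Stratum n) : ℕ :=
  q.colourRank fun _ => ()

theorem colourRank_le_codim {κ : Type*} (s : Fin n → κ) (q : Stratum n) :
    q.colourRank s ≤ q.codim :=
  Set.ncard_le_ncard fun _ ⟨j, _, hb⟩ => ⟨j, rfl, hb⟩

theorem codim_strictMono : StrictMono (codim : Stratum n → ℕ) := by
  refine fun q q' h => lt_of_le_of_ne (Set.ncard_le_ncard (covered_mono h.le)) fun hc => h.ne ?_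
  have hbelow : ∀ i j, q'.below i j → q.below i j := fun i j =>
    below_of_colourRank_eq h.le hc rfl
  refine le_antisymm h.le ⟨fun i j hl => ?_, hbelow⟩
  by_contra hl'
  rcases trichotomous_of q'.lt i j with hij | rfl | hji
  · exact (hbelow i j ⟨hij, hl'⟩).2 hl
  · exact irrefl_of q.lt _ (q.lt_of_left hl)
  · rcases lt_iff_left_or_below.1 hji with hji | hji
    · exact not_left_of_lt (q.lt_of_left hl) (h.le.1 _ _ hji)
    · exact asymm_of q.lt (q.lt_of_left hl) (hbelow _ _ hji).1

theorem codim_le (q : Stratum (n + 1)) : q.codim ≤ n := by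
  have h := q.colourRank_add_ncard_le (Set.injOn_singleton (fun _ => ()) (0 : Fin (n + 1)))
  rwa [Set.ncard_singleton, Nat.add_le_add_iff_right] at h

end Stratum

section Complexes

/-- The geometric realization of the order complex of the subset `P` of a finite poset `Q`: points
are given by their barycentric coordinates, supported on a chain of elements of `P`. -/
def orderComplex {Q : Type*} [Fintype Q] [LE Q] (P : Set Q) : Set (Q → ℝ) :=
  {x ∈ stdSimplex ℝ Q | Function.support x ⊆ P ∧ IsChain (· ≤ ·) (Function.support x)}

/-- The join of copies, indexed by `C`, of the finite discrete space `Λ`: points are given by their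
barycentric coordinates, whose support meets each copy of `Λ` in at most one point. -/
def discreteJoin (C Λ : Type*) [Fintype C] [Fintype Λ] : Set (C × Λ → ℝ) :=
  {y ∈ stdSimplex ℝ (C × Λ) | Set.InjOn Prod.fst (Function.support y)}

end Complexes

/-! ### The configuration space as a neighbourhood of the complex of strata -/

namespace Stratum

variable {n : ℕ} {q q' : Stratum n} {f : Fin n → ℂ}

open Classical in
/-- The distance from the `i`-th to the `j`-th of the points `f`, measured horizontally if the
stratum puts them in different columns, and vertically otherwise. -/
def gap (q : Stratum n) (f : Fin n → ℂ) (i j : Fin n) : ℝ :=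
  if q.left i j then (f j).re - (f i).re else (f j).im - (f i).im

theorem gap_of_left {i j : Fin n} (h : q.left i j) : q.gap f i j = (f j).re - (f i).re :=
  if_pos h

theorem gap_of_below {i j : Fin n} (h : q.below i j) : q.gap f i j = (f j).im - (f i).im :=
  if_neg h.2

/-- `q.IsNear f`: the points `f` are ordered as prescribed by `q`, up to widening each column by
less than any of the gaps. -/
def IsNear (q : Stratum n) (f : Fin n → ℂ) : Prop :=
  ∀ i j k l, q.lt i j → q.SameColumn k l → |(f k).re - (f l).re| < q.gap f i j

theorem IsNear.gap_pos (h : q.IsNear f) {i j : Fin n} (hij : q.lt i j) : 0 < q.gap f i j := by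
  simpa using h i j i i hij (SameColumn.refl q i)

theorem IsNear.le_of_spread (h : q.IsNear f) (h' : q'.IsNear f)
    (hspread : ∀ k l, q.SameColumn k l → ∃ k' l', q'.SameColumn k' l' ∧
      |(f k).re - (f l).re| ≤ |(f k').re - (f l').re|) : q ≤ q' := by
  have hleft : ∀ i j, q'.left i j → q.left i j := fun i j hij => by
    have hlt : ∀ k l, q.SameColumn k l → |(f k).re - (f l).re| < (f j).re - (f i).re := by
      intro k l hkl
      obtain ⟨k', l', hkl', hle⟩ := hspread k l hkl
      exact hle.trans_lt (gap_of_left hij ▸ h' i j k' l' (q'.lt_of_left hij) hkl')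
    by_contra hl
    by_cases hr : q.left j i
    · have hpos := h.gap_pos (q.lt_of_left hr)
      have hpos' := h'.gap_pos (q'.lt_of_left hij)
      rw [gap_of_left hr] at hpos
      rw [gap_of_left hij] at hpos'
      linarith
    · exact (le_abs_self _).not_gt (hlt j i ⟨hr, hl⟩)
  refine ⟨hleft, fun i j hij => ?_⟩
  have hsame : q'.SameColumn i j :=
    ⟨fun hl => hij.2 (hleft i j hl), fun hl => not_left_of_lt hij.1 (hleft j i hl)⟩
  refine (hsame.below_or_below fun he => irrefl_of q.lt j (he ▸ hij.1)).resolve_right fun hji => ?_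
  have hpos := h.gap_pos hij.1
  have hpos' := h'.gap_pos hji.1
  rw [gap_of_below hij] at hpos
  rw [gap_of_below hji] at hpos'
  linarith

theorem IsNear.le_or_le (h : q.IsNear f) (h' : q'.IsNear f) : q ≤ q' ∨ q' ≤ q := by
  by_cases hspread : ∀ k l, q.SameColumn k l → ∃ k' l', q'.SameColumn k' l' ∧
      |(f k).re - (f l).re| ≤ |(f k').re - (f l').re|
  · exact Or.inl (h.le_of_spread h' hspread)
  · push Not at hspread
    obtain ⟨k, l, hkl, hlt⟩ := hspread
    exact Or.inr (h'.le_of_spread h fun k' l' hkl' => ⟨k, l, hkl, (hlt k' l' hkl').le⟩)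

/-- The stratum containing a configuration. -/
def ofConfig (f : ConfigSpace n) : Stratum n where
  lt i j := (f.1 i).re < (f.1 j).re ∨ (f.1 i).re = (f.1 j).re ∧ (f.1 i).im < (f.1 j).im
  left i j := (f.1 i).re < (f.1 j).re
  isStrictTotalOrder :=
    { irrefl := fun i h => h.elim (lt_irrefl _) fun h => lt_irrefl _ h.2
      trans := by
        rintro i j k (h | ⟨h, hi⟩) (h' | ⟨h', hi'⟩)
        · exact Or.inl (h.trans h')
        · exact Or.inl (h.trans_eq h')
        · exact Or.inl (h.trans_lt h')
        · exact Or.inr ⟨h.trans h', hi.trans hi'⟩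
      trichotomous := fun i j hij hji => by
        push Not at hij hji
        have hre := le_antisymm hji.1 hij.1
        exact f.2 (Complex.ext hre (le_antisymm (hji.2 hre.symm) (hij.2 hre))) }
  lt_of_left := Or.inl
  left_or_left := fun j h => (lt_or_ge _ (f.1 j).re).imp_right fun h' => h'.trans_lt h

theorem isNear_ofConfig (f : ConfigSpace n) : (ofConfig f).IsNear f.1 := by
  intro i j k l hij hkl
  have hre : (f.1 k).re = (f.1 l).re := le_antisymm (not_lt.1 hkl.2) (not_lt.1 hkl.1)
  rw [hre, sub_self, abs_zero]
  rcases lt_iff_left_or_below.1 hij with h | h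
  · exact gap_of_left h ▸ sub_pos.2 h
  · exact gap_of_below h ▸ sub_pos.2 (h.1.resolve_left h.2).2

open Classical in
/-- A continuous function of the configuration that is positive exactly near the stratum `q`. -/
def weight (q : Stratum n) (f : Fin n → ℂ) : ℝ :=
  ∏ p : Fin n × Fin n with q.lt p.1 p.2, ∏ r : Fin n × Fin n with q.SameColumn r.1 r.2,
    max 0 (q.gap f p.1 p.2 - |(f r.1).re - (f r.2).re|)

theorem continuous_weight (q : Stratum n) : Continuous q.weight := by
  refine continuous_finsetProd _ fun p _ => continuous_finsetProd _ fun r _ => ?_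
  unfold gap
  split_ifs <;> fun_prop

theorem weight_nonneg (q : Stratum n) (f : Fin n → ℂ) : 0 ≤ q.weight f :=
  Finset.prod_nonneg fun _ _ => Finset.prod_nonneg fun _ _ => le_max_left _ _

theorem weight_ne_zero_iff : q.weight f ≠ 0 ↔ q.IsNear f := by
  simp only [weight, Finset.prod_ne_zero_iff, Finset.mem_filter, Finset.mem_univ, true_and,
    Prod.forall, ne_eq, max_eq_left_iff, not_le, sub_pos, IsNear]
  exact ⟨fun h i j k l hij hkl => h i j hij k l hkl, fun h i j hij k l hkl => h i j k l hij hkl⟩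

open Classical in
theorem gap_smul (g : Equiv.Perm (Fin n)) (q : Stratum n) (f : Fin n → ℂ) (i j : Fin n) :
    (g • q).gap (f ∘ ⇑g⁻¹) i j = q.gap f (g⁻¹ i) (g⁻¹ j) :=
  if_congr (smul_left_iff g) rfl rfl

theorem weight_smul (g : Equiv.Perm (Fin n)) (q : Stratum n) (f : Fin n → ℂ) :
    (g • q).weight (f ∘ ⇑g⁻¹) = q.weight f := by
  classical
  refine Finset.prod_equiv (g⁻¹.prodCongr g⁻¹) (by simp [smul_lt_iff]) fun p _ => ?_
  refine Finset.prod_equiv (g⁻¹.prodCongr g⁻¹) (by simp [smul_sameColumn_iff]) fun r _ => ?_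
  simp only [gap_smul, Equiv.prodCongr_apply, Prod.map_fst, Prod.map_snd, Function.comp_apply]

theorem sum_weight_pos (f : ConfigSpace n) : 0 < ∑ q : Stratum n, q.weight f.1 :=
  Finset.sum_pos' (fun q _ => q.weight_nonneg _) ⟨ofConfig f, Finset.mem_univ _,
    (weight_nonneg _ _).lt_of_ne' (weight_ne_zero_iff.2 (isNear_ofConfig f))⟩

/-- The map from the configuration space to the order complex of the poset of strata. -/
def coord (f : ConfigSpace n) (q : Stratum n) : ℝ :=
  q.weight f.1 / ∑ q' : Stratum n, q'.weight f.1

theorem coord_mem_orderComplex (f : ConfigSpace n) :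
    coord f ∈ orderComplex (Set.univ : Set (Stratum n)) := by
  refine ⟨⟨fun q => div_nonneg (q.weight_nonneg _) (sum_weight_pos f).le, ?_⟩,
    Set.subset_univ _, fun q hq q' hq' _ => ?_⟩
  · simp only [coord, ← Finset.sum_div, div_self (sum_weight_pos f).ne']
  · exact (weight_ne_zero_iff.1 (div_ne_zero_iff.1 hq).1).le_or_le
      (weight_ne_zero_iff.1 (div_ne_zero_iff.1 hq').1)

theorem continuous_coord : Continuous (coord (n := n)) :=
  continuous_pi fun q => (q.continuous_weight.comp continuous_subtype_val).div
    (continuous_finsetSum _ fun q' _ => q'.continuous_weight.comp continuous_subtype_val)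
    fun f => (sum_weight_pos f).ne'

theorem coord_configPermMap (g : Equiv.Perm (Fin n)) (f : ConfigSpace n) :
    coord (configPermMap n g f) = g • coord f := by
  have hweight : ∀ q : Stratum n, q.weight (configPermMap n g f).1 = (g⁻¹ • q).weight f.1 :=
    fun q => by rw [← weight_smul g (g⁻¹ • q), smul_inv_smul]; rfl
  funext q
  change _ = coord f (g⁻¹ • q)
  simp only [coord, hweight]
  exact congrArg _ (Equiv.sum_comp (MulAction.toPerm g⁻¹) fun q : Stratum n => q.weight f.1)

end Stratum

section Genus

variable {n : ℕ}

theorem continuous_configPermMap (n : ℕ) (g : Equiv.Perm (Fin n)) :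
    Continuous (configPermMap n g) :=
  ((Pi.continuous_precomp ⇑g⁻¹).comp continuous_subtype_val).subtype_mk _

theorem configPermMap_mul (g g' : Equiv.Perm (Fin n)) (f : ConfigSpace n) :
    configPermMap n (g * g') f = configPermMap n g (configPermMap n g' f) :=
  rfl

theorem configPermMap_one (f : ConfigSpace n) : configPermMap n 1 f = f :=
  rfl

theorem configProj_configPermMap (g : Equiv.Perm (Fin n)) (f : ConfigSpace n) :
    configProj n (configPermMap n g f) = configProj n f :=
  (Quotient.sound (s := configSetoid n) ⟨g, rfl⟩).symm

theorem exists_configPermMap_eq {f f' : ConfigSpace n} (h : configProj n f = configProj n f') :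
    ∃ g : Equiv.Perm (Fin n), configPermMap n g f = f' :=
  Quotient.exact h

theorem isQuotientMap_configProj (n : ℕ) : Topology.IsQuotientMap (configProj n) :=
  isQuotientMap_quot_mk

section Trivialization

variable [TopologicalSpace (Equiv.Perm (Fin n))] [DiscreteTopology (Equiv.Perm (Fin n))]
  {U : Set (ConfigQuotient n)} {label : configProj n ⁻¹' U → Equiv.Perm (Fin n)}

theorem continuous_configPermMap_uncurry :
    Continuous fun p : Equiv.Perm (Fin n) × ConfigSpace n => configPermMap n p.1 p.2 :=
  continuous_prod_of_discrete_left.2 (continuous_configPermMap n)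

theorem exists_continuousMap_configProj (hU : IsOpen U) (hlabel : Continuous label)
    (hequi : ∀ g (x y : configProj n ⁻¹' U),
      configPermMap n g x.1 = y.1 → label y = g * label x) :
    ∃ lift : C(U, ConfigSpace n), ∀ x : configProj n ⁻¹' U,
      lift ⟨configProj n x.1, x.2⟩ = configPermMap n (label x)⁻¹ x.1 := by
  let proj : C(configProj n ⁻¹' U, U) :=
    ⟨U.restrictPreimage (configProj n), (isQuotientMap_configProj n).continuous.restrictPreimage⟩
  have hproj : Topology.IsQuotientMap proj :=
    (isQuotientMap_configProj n).restrictPreimage_isOpen hU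
  let normalize : C(configProj n ⁻¹' U, ConfigSpace n) :=
    ⟨fun x => configPermMap n (label x)⁻¹ x.1,
      continuous_configPermMap_uncurry.comp (hlabel.inv.prodMk continuous_subtype_val)⟩
  have hfib : Function.FactorsThrough normalize proj := by
    intro x y hxy
    obtain ⟨g, hg⟩ := exists_configPermMap_eq (congrArg Subtype.val hxy)
    simp only [normalize, ContinuousMap.coe_mk, hequi g x y hg, ← hg, ← configPermMap_mul,
      mul_inv_rev, inv_mul_cancel_right]
  exact ⟨hproj.lift normalize hfib, DFunLike.congr_fun (hproj.lift_comp normalize hfib)⟩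

theorem exists_homeomorph_of_equivariant (hU : IsOpen U) (hlabel : Continuous label)
    (hequi : ∀ g (x y : configProj n ⁻¹' U),
      configPermMap n g x.1 = y.1 → label y = g * label x) :
    ∃ e : configProj n ⁻¹' U ≃ₜ U × Equiv.Perm (Fin n),
      ∀ x, ((e x).1 : ConfigQuotient n) = configProj n x := by
  obtain ⟨lift, hlift⟩ := exists_continuousMap_configProj hU hlabel hequi
  have hmem : ∀ u g, configProj n (configPermMap n g (lift u)) = u := by
    rintro ⟨u, hu⟩ g
    obtain ⟨x, rfl⟩ := (isQuotientMap_configProj n).surjective u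
    rw [hlift ⟨x, hu⟩, configProj_configPermMap, configProj_configPermMap]
  have hmem' : ∀ p : U × Equiv.Perm (Fin n),
      configPermMap n p.2 (lift p.1) ∈ configProj n ⁻¹' U := fun p => by
    rw [Set.mem_preimage, hmem]
    exact p.1.2
  let e : configProj n ⁻¹' U ≃ U × Equiv.Perm (Fin n) :=
    { toFun x := (⟨configProj n x.1, x.2⟩, label x)
      invFun p := ⟨configPermMap n p.2 (lift p.1), hmem' p⟩
      left_inv x := Subtype.ext ?_
      right_inv := ?_ }
  · have hcont : Continuous fun x : configProj n ⁻¹' U => (⟨configProj n x.1, x.2⟩ : U) :=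
      ((isQuotientMap_configProj n).continuous.comp continuous_subtype_val).subtype_mk _
    have hcont' : Continuous fun p : U × Equiv.Perm (Fin n) => configPermMap n p.2 (lift p.1) :=
      continuous_configPermMap_uncurry.comp
        (continuous_snd.prodMk (lift.continuous.comp continuous_fst))
    exact ⟨⟨e, hcont.prodMk hlabel, hcont'.subtype_mk hmem'⟩, fun _ => rfl⟩
  · simp only [hlift, ← configPermMap_mul, mul_inv_cancel, configPermMap_one]
  · rintro ⟨⟨u, hu⟩, g⟩
    refine Prod.ext (Subtype.ext (hmem _ g)) ?_
    obtain ⟨x, rfl⟩ := (isQuotientMap_configProj n).surjective u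
    refine (hequi (g * (label ⟨x, hu⟩)⁻¹) ⟨x, hu⟩ _ ?_).trans (inv_mul_cancel_right _ _)
    exact congrArg (configPermMap n g) (hlift ⟨x, hu⟩).symm

end Trivialization

/-- Schwarz's criterion: the support of the `c`-th factor of the join is trivialized by the label
of that factor. -/
theorem schwartzGenusLE_of_equivariant {t : ℕ}
    {φ : ConfigSpace n → Fin t × Equiv.Perm (Fin n) → ℝ} (hφ : Continuous φ)
    (hmem : ∀ f, φ f ∈ discreteJoin (Fin t) (Equiv.Perm (Fin n)))
    (hequi : ∀ g f c l, φ (configPermMap n g f) (c, g * l) = φ f (c, l)) :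
    SchwartzGenusLE n t := by
  let _ : TopologicalSpace (Equiv.Perm (Fin n)) := ⊥
  have hdisc : DiscreteTopology (Equiv.Perm (Fin n)) := ⟨rfl⟩
  let U : Fin t → Set (ConfigQuotient n) := fun c => configProj n '' {f | ∃ l, φ f (c, l) ≠ 0}
  have hpre : ∀ c, configProj n ⁻¹' U c = {f | ∃ l, φ f (c, l) ≠ 0} := by
    refine fun c => Set.Subset.antisymm ?_ (Set.subset_preimage_image _ _)
    rintro f ⟨f', ⟨l, hl⟩, hf⟩
    obtain ⟨g, rfl⟩ := exists_configPermMap_eq hf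
    exact ⟨g * l, by rwa [hequi]⟩
  have hopen : ∀ c l, IsOpen {f | φ f (c, l) ≠ 0} := fun c l =>
    isOpen_ne_fun ((continuous_apply _).comp hφ) continuous_const
  have hU : ∀ c, IsOpen (U c) := by
    intro c
    rw [← (isQuotientMap_configProj n).isOpen_preimage, hpre, Set.ofPred_exists]
    exact isOpen_iUnion (hopen c)
  have hunique : ∀ {f c l l'}, φ f (c, l) ≠ 0 → φ f (c, l') ≠ 0 → l = l' :=
    fun {f c l l'} hl hl' => (Prod.ext_iff.1 ((hmem f).2 hl hl' rfl)).2
  refine ⟨U, hU, Set.eq_univ_of_forall fun u => ?_, fun c => ⟨_, _, hdisc, ?_⟩⟩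
  · obtain ⟨f, rfl⟩ := (isQuotientMap_configProj n).surjective u
    obtain ⟨⟨c, l⟩, -, hcl⟩ := Finset.exists_ne_zero_of_sum_ne_zero
      ((hmem f).1.2.trans_ne one_ne_zero)
    exact Set.mem_iUnion.2 ⟨c, f, ⟨l, hcl⟩, rfl⟩
  · choose label hlabel using fun x : configProj n ⁻¹' U c => (hpre c).subset x.2
    refine exists_homeomorph_of_equivariant (hU c) (label := label) ?_ fun g x y hxy => ?_
    · refine continuous_discrete_rng.2 fun l => ?_
      convert (hopen c l).preimage continuous_subtype_val using 1
      exact Set.ext fun x => ⟨fun h => h ▸ hlabel x, hunique (hlabel x)⟩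
    · exact hunique (hlabel y) (by rw [← hxy, hequi]; exact hlabel x)

end Genus

section ColouredBumps

variable {m : ℕ}

/-- Bump functions on the open cells of a cubical grid of mesh `M⁻¹` in `ℝ^m`, one grid for each
of `m + 1` colours; the grid of colour `c` is shifted diagonally by `c / (m + 1)` of the mesh. -/
def colouredBump (M : ℝ) (c : Fin (m + 1)) (k : Fin m → ℤ) (x : Fin m → ℝ) : ℝ :=
  ∏ i, 2 * (m + 1) * max 0 (min (M * x i - c / (m + 1) - k i) (1 - (M * x i - c / (m + 1) - k i)))

variable {M : ℝ} {c : Fin (m + 1)} {k k' : Fin m → ℤ} {x y : Fin m → ℝ}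

theorem continuous_colouredBump (M : ℝ) (c : Fin (m + 1)) (k : Fin m → ℤ) :
    Continuous (colouredBump M c k) := by
  unfold colouredBump
  fun_prop

theorem colouredBump_nonneg (M : ℝ) (c : Fin (m + 1)) (k : Fin m → ℤ) (x : Fin m → ℝ) :
    0 ≤ colouredBump M c k x :=
  Finset.prod_nonneg fun _ _ => mul_nonneg (by positivity) (le_max_left _ _)

theorem mem_Ioo_of_colouredBump_ne_zero (h : colouredBump M c k x ≠ 0) (i : Fin m) :
    M * x i - c / (m + 1) - k i ∈ Set.Ioo (0 : ℝ) 1 := by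
  have hi := right_ne_zero_of_mul (Finset.prod_ne_zero_iff.1 h i (Finset.mem_univ i))
  have hpos := (lt_max_iff.1 ((le_max_left _ _).lt_of_ne hi.symm)).resolve_left (lt_irrefl 0)
  exact ⟨(lt_min_iff.1 hpos).1, sub_pos.1 (lt_min_iff.1 hpos).2⟩

theorem eq_of_colouredBump_ne_zero (h : colouredBump M c k x ≠ 0) (h' : colouredBump M c k' x ≠ 0) :
    k = k' := by
  funext i
  obtain ⟨h0, h1⟩ := mem_Ioo_of_colouredBump_ne_zero h i
  obtain ⟨h0', h1'⟩ := mem_Ioo_of_colouredBump_ne_zero h' i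
  exact (Int.floor_eq_iff.2 ⟨by linarith, by linarith⟩).symm.trans
    (Int.floor_eq_iff.2 ⟨by linarith, by linarith⟩ : ⌊M * x i - c / (m + 1)⌋ = k' i)

theorem dist_lt_of_colouredBump_ne_zero {δ : ℝ} (hδ : 0 < δ)
    (h : colouredBump δ⁻¹ c k x ≠ 0) (h' : colouredBump δ⁻¹ c k y ≠ 0) : dist x y < δ := by
  refine (dist_pi_lt_iff hδ).2 fun i => ?_
  obtain ⟨h0, h1⟩ := mem_Ioo_of_colouredBump_ne_zero h i
  obtain ⟨h0', h1'⟩ := mem_Ioo_of_colouredBump_ne_zero h' i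
  have hlt : |δ⁻¹ * (x i - y i)| < 1 := abs_lt.2 ⟨by linarith, by linarith⟩
  rwa [abs_mul, abs_inv, abs_of_pos hδ, inv_mul_lt_iff₀ hδ, mul_one] at hlt

/-- Each coordinate of a point is close to the grid of at most one colour, and there are more
colours than coordinates. -/
theorem exists_far_from_grid (x : Fin m → ℝ) :
    ∃ c : Fin (m + 1), ∀ i, 1 / (2 * (m + 1)) ≤
      |x i - c / (m + 1) - round (x i - (c : ℝ) / (m + 1))| := by
  by_contra! hnear
  choose i hi using hnear
  obtain ⟨c, c', hne, heq⟩ := Fintype.exists_ne_map_eq_of_card_lt i (by simp)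
  have hm : (0 : ℝ) < m + 1 := by positivity
  set z := round (x (i c') - (c' : ℝ) / (m + 1)) - round (x (i c') - (c : ℝ) / (m + 1)) with hz
  have hlt : |(c : ℝ) / (m + 1) - c' / (m + 1) - z| < 1 / (m + 1) := by
    have hc := abs_lt.1 (heq ▸ hi c)
    have hc' := abs_lt.1 (hi c')
    have hhalf : (1 : ℝ) / (2 * (m + 1)) = 1 / (m + 1) / 2 := by rw [mul_comm, div_mul_eq_div_div]
    rw [hhalf] at hc hc'
    rw [hz, Int.cast_sub, abs_lt]
    constructor <;> linarith
  have hzero : (c : ℤ) - c' - (m + 1) * z = 0 := by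
    rw [← Int.abs_lt_one_iff, ← Int.cast_lt (R := ℝ)]
    have hmul : (c : ℝ) / (m + 1) - c' / (m + 1) - z = (c - c' - (m + 1) * z) / (m + 1) := by
      field_simp
    rw [hmul, abs_div, abs_of_pos hm, div_lt_div_iff_of_pos_right hm] at hlt
    exact_mod_cast hlt
  have hdvd : ((m + 1 : ℕ) : ℤ) ∣ (c : ℤ) - c' := ⟨z, by push_cast; linarith⟩
  refine hne (Fin.ext ?_)
  have := Int.eq_zero_of_abs_lt_dvd hdvd (by have := c.2; have := c'.2; rw [abs_lt]; omega)
  omega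

theorem exists_one_le_colouredBump (M : ℝ) (x : Fin m → ℝ) :
    ∃ c k, (∀ i, |k i| ≤ |M * x i| + 2) ∧ 1 ≤ colouredBump M c k x := by
  obtain ⟨c, hc⟩ := exists_far_from_grid fun i => M * x i
  have hm : (0 : ℝ) < 2 * (m + 1) := by positivity
  refine ⟨c, fun i => ⌊M * x i - c / (m + 1)⌋, fun i => ?_, ?_⟩
  · have hc0 : (0 : ℝ) ≤ c / (m + 1) := by positivity
    have hc1 : (c : ℝ) / (m + 1) ≤ 1 := (div_le_one (by positivity)).2 (by exact_mod_cast c.2.le)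
    have h0 := Int.sub_one_lt_floor (M * x i - c / (m + 1))
    have h1 := Int.floor_le (M * x i - c / (m + 1))
    have := neg_abs_le (M * x i)
    have := le_abs_self (M * x i)
    push_cast
    exact abs_le.2 ⟨by linarith, by linarith⟩
  · refine Finset.one_le_prod fun i _ => ?_
    have hi := hc i
    rw [abs_sub_round_eq_min, div_le_iff₀' hm] at hi
    exact hi.trans (mul_le_mul_of_nonneg_left (le_max_right _ _) hm.le)

theorem exists_finset_one_le_colouredBump (M : ℝ) {K : Set (Fin m → ℝ)} (hK : IsCompact K) :
    ∃ V : Finset (Fin m → ℤ), ∀ x ∈ K, ∃ c, ∃ k ∈ V, 1 ≤ colouredBump M c k x := by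
  obtain ⟨R, hR⟩ := hK.exists_bound_of_continuousOn (f := fun x => M • x) (by fun_prop)
  refine ⟨Finset.Icc (fun _ => -⌈R + 2⌉) fun _ => ⌈R + 2⌉, fun x hx => ?_⟩
  obtain ⟨c, k, hk, hone⟩ := exists_one_le_colouredBump M x
  have hbound : ∀ i, |k i| ≤ ⌈R + 2⌉ := fun i => by
    have hi : (|k i| : ℝ) ≤ R + 2 :=
      (hk i).trans (add_le_add_left ((norm_le_pi_norm (M • x) i).trans (hR x hx)) 2)
    exact_mod_cast hi.trans (Int.le_ceil _)
  exact ⟨c, k, Finset.mem_Icc.2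
    ⟨fun i => (abs_le.1 (hbound i)).1, fun i => (abs_le.1 (hbound i)).2⟩, hone⟩

theorem exists_dist_lt_of_injective {X : Type*} [TopologicalSpace X] [CompactSpace X] {E F : Type*}
    [MetricSpace E] [PseudoMetricSpace F] {e : X → E} (he : Continuous e) (hinj : e.Injective)
    {z : X → F} (hz : Continuous z) {ε : ℝ} (hε : 0 < ε) :
    ∃ δ > 0, ∀ x x', dist (e x) (e x') < δ → dist (z x) (z x') < ε := by
  have hclosed : IsClosed {p : X × X | ε ≤ dist (z p.1) (z p.2)} :=
    isClosed_le continuous_const (by fun_prop)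
  obtain ⟨δ, hδ, hle⟩ := hclosed.isCompact.exists_forall_le' (a := 0)
    (f := fun p => dist (e p.1) (e p.2)) (by fun_prop) fun p hp => dist_pos.2 fun heq => by
      rw [Set.mem_ofPred_eq, hinj heq, dist_self] at hp
      exact hp.not_gt hε
  exact ⟨δ, hδ, fun x x' h => not_le.1 fun h' => (hle (x, x') h').not_gt h⟩

theorem exists_compatible_bumps {X Λ : Type*} [TopologicalSpace X] [CompactSpace X] [Finite Λ]
    [Nonempty Λ] {e : X → Fin m → ℝ} (he : Continuous e) (hinj : e.Injective)
    {z : X → Fin (m + 1) × Λ → ℝ} (hz : Continuous z)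
    (hz_injOn : ∀ x, Set.InjOn Prod.fst (Function.support (z x))) {ε : ℝ} (hε : 0 < ε) :
    ∃ b : X → Fin (m + 1) × Λ → ℝ, Continuous b ∧ (∀ x, 0 ≤ b x) ∧
      (∀ x c g l, ε < z x (c, g) → l ≠ g → b x (c, l) = 0) ∧
      ∀ x, ∃ c l, 1 ≤ b x (c, l) ∧ ∀ l' ≠ l, b x (c, l') = 0 := by
  classical
  have := Fintype.ofFinite Λ
  obtain ⟨δ, hδ, hδε⟩ := exists_dist_lt_of_injective he hinj hz hε
  obtain ⟨V, hV⟩ := exists_finset_one_le_colouredBump δ⁻¹ (isCompact_range he)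
  have hlabel : ∀ c k, ∃ l, ∀ x g, colouredBump δ⁻¹ c k (e x) ≠ 0 → ε < z x (c, g) → l = g := by
    intro c k
    by_cases hex : ∃ x g, colouredBump δ⁻¹ c k (e x) ≠ 0 ∧ ε < z x (c, g)
    · obtain ⟨x, g, hx, hg⟩ := hex
      refine ⟨g, fun x' g' hx' hg' => ?_⟩
      have hdist := (dist_le_pi_dist (z x) (z x') (c, g)).trans_lt
        (hδε x x' (dist_lt_of_colouredBump_ne_zero hδ hx hx'))
      have hpos : 0 < z x' (c, g) := by linarith [(abs_lt.1 hdist).2]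
      exact congrArg Prod.snd (hz_injOn x' hpos.ne' (hε.trans hg').ne' rfl)
    · exact ⟨Classical.arbitrary Λ, fun x g hx hg => (hex ⟨x, g, hx, hg⟩).elim⟩
  choose label hlabel using hlabel
  refine ⟨fun x v => ∑ k ∈ V, if label v.1 k = v.2 then colouredBump δ⁻¹ v.1 k (e x) else 0,
    ?_, fun x v => Finset.sum_nonneg fun k _ => ?_, fun x c g l hg hl => ?_, fun x => ?_⟩
  · refine continuous_pi fun v => continuous_finsetSum _ fun k _ => ?_
    split_ifs
    · exact (continuous_colouredBump _ _ _).comp he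
    · exact continuous_const
  · split_ifs
    exacts [colouredBump_nonneg _ _ _ _, le_rfl]
  · refine Finset.sum_eq_zero fun k _ => ite_eq_right_iff.2 fun hk => ?_
    by_contra hne
    exact hl (hk.symm.trans (hlabel c k x g hne hg))
  · obtain ⟨c, k, hk, hone⟩ := hV _ ⟨x, rfl⟩
    have hsum : ∀ l, (∑ k' ∈ V, if label c k' = l then colouredBump δ⁻¹ c k' (e x) else 0) =
        if label c k = l then colouredBump δ⁻¹ c k (e x) else 0 := fun l =>
      Finset.sum_eq_single_of_mem k hk fun k' _ hne => ite_eq_right_iff.2 fun _ => by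
        by_contra hk'
        exact hne (eq_of_colouredBump_ne_zero hk' (by positivity))
    exact ⟨c, label c k, by simpa only [hsum, if_true] using hone, fun l' hl' => by
      simp only [hsum, if_neg hl'.symm]⟩

end ColouredBumps

section Extension

variable {C Λ X : Type*} [Fintype Λ]

/-- Subtracts from each coordinate the other coordinates of its column, and truncates. On functions
supported by at most one point of each column this is the identity. -/
def dominantPart (z : C × Λ → ℝ) (v : C × Λ) : ℝ :=
  max 0 (2 * z v - ∑ l, z (v.1, l))

theorem continuous_dominantPart : Continuous (dominantPart (C := C) (Λ := Λ)) := by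
  unfold dominantPart
  fun_prop

theorem dominantPart_nonneg (z : C × Λ → ℝ) : 0 ≤ dominantPart z :=
  fun _ => le_max_left _ _

theorem dominantPart_pos_iff {z : C × Λ → ℝ} {v : C × Λ} :
    0 < dominantPart z v ↔ ∑ l, z (v.1, l) < 2 * z v := by
  simp only [dominantPart, lt_max_iff, lt_self_iff_false, false_or, sub_pos]

theorem injOn_support_dominantPart {z : C × Λ → ℝ} (hz : 0 ≤ z) :
    Set.InjOn Prod.fst (Function.support (dominantPart z)) := by
  classical
  rintro ⟨c, l⟩ hl ⟨_, l'⟩ hl' rfl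
  have hlt := dominantPart_pos_iff.1 ((dominantPart_nonneg z _).lt_of_ne (Ne.symm hl))
  have hlt' := dominantPart_pos_iff.1 ((dominantPart_nonneg z _).lt_of_ne (Ne.symm hl'))
  by_contra hne
  have hsum : ∑ i ∈ {l, l'}, z (c, i) ≤ ∑ i, z (c, i) :=
    Finset.sum_le_univ_sum_of_nonneg fun i => hz _
  rw [Finset.sum_pair fun h => hne (congrArg (Prod.mk c) h)] at hsum
  dsimp only at hlt hlt'
  linarith

theorem dominantPart_eq_self {z : C × Λ → ℝ} (hz : 0 ≤ z)
    (h : Set.InjOn Prod.fst (Function.support z)) : dominantPart z = z := by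
  funext v
  by_cases hv : z v = 0
  · have := Finset.sum_nonneg fun l (_ : l ∈ Finset.univ) => hz (v.1, l)
    rw [dominantPart, hv, max_eq_left]
    simpa using this
  · have hcol : ∀ l ≠ v.2, z (v.1, l) = 0 := fun l hl => by
      by_contra hvl
      exact hl (congrArg Prod.snd (h hvl hv rfl))
    have hsum : ∑ l, z (v.1, l) = z v := Fintype.sum_eq_single v.2 hcol
    have hv0 : 0 ≤ z v := hz v
    rw [dominantPart, hsum, max_eq_right] <;> linarith

theorem sum_column_le {z : C × Λ → ℝ} (h : Set.InjOn Prod.fst (Function.support z)) {ε : ℝ}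
    (hε : 0 ≤ ε) (hz : ∀ v, z v ≤ ε) (c : C) : ∑ l, z (c, l) ≤ ε := by
  by_cases hex : ∃ g, z (c, g) ≠ 0
  · obtain ⟨g, hg⟩ := hex
    refine (Fintype.sum_eq_single g fun l hl => ?_).trans_le (hz (c, g))
    by_contra hne
    exact hl (congrArg Prod.snd (h hne hg rfl))
  · push Not at hex
    exact (Finset.sum_eq_zero fun l _ => hex l).trans_le hε

variable [Fintype C]

/-- The barycentric coordinates of the point with homogeneous coordinates `z`. -/
def normalize (z : C × Λ → ℝ) (v : C × Λ) : ℝ :=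
  z v / ∑ w, z w

theorem normalize_mem_discreteJoin {z : C × Λ → ℝ} (hz : 0 ≤ z)
    (h : Set.InjOn Prod.fst (Function.support z)) {v : C × Λ} (hv : 0 < z v) :
    normalize z ∈ discreteJoin C Λ := by
  have hpos : 0 < ∑ w, z w := Finset.sum_pos' (fun w _ => hz w) ⟨v, Finset.mem_univ v, hv⟩
  refine ⟨⟨fun w => div_nonneg (hz w) hpos.le, ?_⟩, h.mono fun w hw => ?_⟩
  · simp only [normalize, ← Finset.sum_div, div_self hpos.ne']
  · exact (div_ne_zero_iff.1 hw).1

theorem normalize_eq_self {z : C × Λ → ℝ} (hz : ∑ w, z w = 1) : normalize z = z := by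
  funext v
  rw [normalize, hz, div_one]

theorem continuous_normalize_comp [TopologicalSpace X] {z : X → C × Λ → ℝ} (hz : Continuous z)
    (hpos : ∀ x, ∃ v, 0 < dominantPart (z x) v) :
    Continuous fun x => normalize (dominantPart (z x)) := by
  have hdom := continuous_dominantPart.comp hz
  refine continuous_pi fun v => ((continuous_apply v).comp hdom).div
    (continuous_finsetSum _ fun w _ => (continuous_apply w).comp hdom) fun x => ?_
  obtain ⟨v, hv⟩ := hpos x
  exact (Finset.sum_pos' (fun w _ => dominantPart_nonneg _ w) ⟨v, Finset.mem_univ v, hv⟩).ne'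

theorem exists_dominantPart_pos {z b : C × Λ → ℝ} (hz : 0 ≤ z) (hb : 0 ≤ b)
    (hz_injOn : Set.InjOn Prod.fst (Function.support z)) {ε : ℝ} (hε : 0 < ε)
    (hεC : Fintype.card C * ε ≤ 1 / 2) (hcompat : ∀ c g l, ε < z (c, g) → l ≠ g → b (c, l) = 0)
    (hone : ∃ c l, 1 ≤ b (c, l) ∧ ∀ l' ≠ l, b (c, l') = 0) :
    ∃ v, 0 < dominantPart (z + max 0 (2 - 2 * ∑ w, z w) • b) v := by
  set η := max 0 (2 - 2 * ∑ w, z w)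
  simp only [dominantPart_pos_iff]
  by_cases hbig : ∃ c g, ε < z (c, g)
  · obtain ⟨c, g, hg⟩ := hbig
    have hcol : ∀ l ≠ g, (z + η • b) (c, l) = 0 := fun l hl => by
      have hzl : z (c, l) = 0 := by
        by_contra hne
        exact hl (congrArg Prod.snd (hz_injOn hne (hε.trans hg).ne' rfl))
      simp only [Pi.add_apply, Pi.smul_apply, hzl, hcompat c g l hg hl, smul_zero, add_zero]
    have hpos : 0 < (z + η • b) (c, g) :=
      add_pos_of_pos_of_nonneg (hε.trans hg) (mul_nonneg (le_max_left _ _) (hb _))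
    exact ⟨(c, g), by linarith [Fintype.sum_eq_single g hcol]⟩
  · push Not at hbig
    have hsum_le : ∀ c, ∑ l, z (c, l) ≤ ε := sum_column_le hz_injOn hε.le fun v => hbig v.1 v.2
    have hη : 1 ≤ η := by
      have hsum : ∑ w, z w ≤ Fintype.card C * ε := by
        rw [Fintype.sum_prod_type, ← nsmul_eq_mul]
        exact Finset.sum_le_card_nsmul _ _ _ fun c _ => hsum_le c
      exact le_max_of_le_right (by linarith)
    obtain ⟨c, l, hbl, hbl'⟩ := hone
    have hcard : (1 : ℝ) ≤ Fintype.card C := by exact_mod_cast Fintype.card_pos_iff.2 ⟨c⟩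
    have hcol : ∑ l', (z + η • b) (c, l') = ∑ l', z (c, l') + η * b (c, l) := by
      simp only [Pi.add_apply, Pi.smul_apply, smul_eq_mul, Finset.sum_add_distrib,
        ← Finset.mul_sum, Fintype.sum_eq_single l hbl']
    have hzl : 0 ≤ z (c, l) := hz _
    have hval : (z + η • b) (c, l) = z (c, l) + η * b (c, l) := rfl
    refine ⟨(c, l), ?_⟩
    rw [hcol, hval]
    nlinarith [hsum_le c]

section Extend

variable [TopologicalSpace X] {A : Set X}

theorem exists_continuous_injOn_support [NormalSpace X] (hA : IsClosed A)
    (f : C(A, discreteJoin C Λ)) :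
    ∃ z : X → C × Λ → ℝ, Continuous z ∧ (∀ x, 0 ≤ z x) ∧
      (∀ x, Set.InjOn Prod.fst (Function.support (z x))) ∧ ∀ x : A, z x = (f x).1 := by
  obtain ⟨F, hF⟩ := ContinuousMap.exists_restrict_eq hA (Y := C × Λ → ℝ)
    ⟨fun x => (f x).1, by fun_prop⟩
  refine ⟨fun x => dominantPart fun v => max 0 (F x v),
    continuous_dominantPart.comp (by fun_prop), fun x => dominantPart_nonneg _,
    fun x => injOn_support_dominantPart fun v => le_max_left _ _, fun x => ?_⟩
  have hmax : (fun v => max 0 (F x v)) = (f x).1 :=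
    funext fun v => (congrArg (max 0 <| · v) (DFunLike.congr_fun hF x)).trans
      (max_eq_right ((f x).2.1.1 v))
  exact (congrArg dominantPart hmax).trans (dominantPart_eq_self (f x).2.1.1 (f x).2.2)

variable [CompactSpace X] [Nonempty Λ] {m : ℕ}

theorem exists_extension_of_injective {e : X → Fin m → ℝ} (he : Continuous e)
    (hinj : e.Injective) (hA : IsClosed A) (f : C(A, discreteJoin (Fin (m + 1)) Λ)) :
    ∃ F : C(X, discreteJoin (Fin (m + 1)) Λ), F.restrict A = f := by
  have : T2Space X := .of_injective_continuous hinj he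
  obtain ⟨z, hz, hz_nonneg, hz_injOn, hzA⟩ := exists_continuous_injOn_support hA f
  have hε : (0 : ℝ) < 1 / (2 * (m + 1)) := by positivity
  obtain ⟨b, hb, hb_nonneg, hcompat, hone⟩ := exists_compatible_bumps he hinj hz hz_injOn hε
  let G : X → Fin (m + 1) × Λ → ℝ := fun x => z x + max 0 (2 - 2 * ∑ w, z x w) • b x
  have hG_nonneg : ∀ x, 0 ≤ G x := fun x =>
    add_nonneg (hz_nonneg x) (smul_nonneg (le_max_left _ _) (hb_nonneg x))
  have hpos : ∀ x, ∃ v, 0 < dominantPart (G x) v := fun x =>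
    exists_dominantPart_pos (hz_nonneg x) (hb_nonneg x) (hz_injOn x) hε
      (by rw [Fintype.card_fin]; push_cast; field_simp; rfl) (hcompat x) (hone x)
  have hmem : ∀ x, normalize (dominantPart (G x)) ∈ discreteJoin (Fin (m + 1)) Λ := fun x =>
    normalize_mem_discreteJoin (dominantPart_nonneg _)
      (injOn_support_dominantPart (hG_nonneg x)) (hpos x).choose_spec
  refine ⟨⟨fun x => ⟨_, hmem x⟩,
    (continuous_normalize_comp (by fun_prop) hpos).subtype_mk hmem⟩, ?_⟩
  ext x : 2
  have hsum : ∑ w, (f x).1 w = 1 := (f x).2.1.2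
  have hGx : G x = (f x).1 := by
    simp only [G, hzA, hsum, mul_one, sub_self, max_self, zero_smul, add_zero]
  calc normalize (dominantPart (G x)) = normalize (f x).1 := by
        rw [hGx, dominantPart_eq_self (f x).2.1.1 (f x).2.2]
    _ = (f x).1 := normalize_eq_self hsum

theorem exists_continuousOn_union {K : Set X} (hA : IsClosed A) (hK : IsClosed K)
    {e : X → Fin m → ℝ} (he : Continuous e) (hinj : Set.InjOn e K)
    {f : X → discreteJoin (Fin (m + 1)) Λ} (hf : ContinuousOn f A) :
    ∃ F : X → discreteJoin (Fin (m + 1)) Λ, ContinuousOn F (A ∪ K) ∧ Set.EqOn F f A := by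
  classical
  have := isCompact_iff_compactSpace.1 hK.isCompact
  obtain ⟨G, hG⟩ := exists_extension_of_injective (he.comp continuous_subtype_val) hinj.injective
    (hA.preimage continuous_subtype_val) (A := (Subtype.val ⁻¹' A : Set K))
    ⟨fun x => f x.1, continuousOn_iff_continuous_domRestrict.1 <|
      hf.comp continuous_subtype_val.continuousOn (Set.mapsTo_preimage _ _)⟩
  have hGf : ∀ x : K, x.1 ∈ A → G x = f x := fun x hx => DFunLike.congr_fun hG ⟨x, hx⟩
  let F : X → discreteJoin (Fin (m + 1)) Λ := fun x =>
    if hx : x ∈ K then G ⟨x, hx⟩ else f x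
  have hFA : Set.EqOn F f A := fun x hx => by
    by_cases hxK : x ∈ K
    · exact (dif_pos hxK).trans (hGf ⟨x, hxK⟩ hx)
    · exact dif_neg hxK
  refine ⟨F, (hf.congr hFA).union_of_isClosed ?_ hA hK, hFA⟩
  exact continuousOn_iff_continuous_domRestrict.2 
    (G.continuous.congr fun x => (dif_pos x.2 : F x = G x).symm)

end Extend

/-- `X` is a finite union of closed subsets that embed into `ℝ^d`. For the spaces considered here
this is a convenient substitute for having dimension at most `d`. -/
def PiecewiseEmbeds (X : Type*) [TopologicalSpace X] (d : ℕ) : Prop :=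
  ∃ (ι : Type) (_ : Finite ι) (K : ι → Set X) (e : ι → X → Fin d → ℝ), (∀ i, IsClosed (K i)) ∧
    (⋃ i, K i) = Set.univ ∧ (∀ i, Continuous (e i)) ∧ ∀ i, Set.InjOn (e i) (K i)

section PiecewiseEmbeds

variable [TopologicalSpace X] {d m : ℕ}

theorem PiecewiseEmbeds.of_injective {e : X → Fin d → ℝ} (he : Continuous e) (hinj : e.Injective) :
    PiecewiseEmbeds X d :=
  ⟨Unit, inferInstance, fun _ => Set.univ, fun _ => e, fun _ => isClosed_univ,
    Set.iUnion_const _, fun _ => he, fun _ => hinj.injOn⟩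

theorem PiecewiseEmbeds.of_subsingleton [Subsingleton X] : PiecewiseEmbeds X 0 :=
  .of_injective (e := fun _ => 0) continuous_const (Function.injective_of_subsingleton _)

theorem PiecewiseEmbeds.mono (h : PiecewiseEmbeds X d) (hdm : d ≤ m) : PiecewiseEmbeds X m := by
  obtain ⟨k, rfl⟩ := Nat.exists_eq_add_of_le hdm
  obtain ⟨ι, hι, K, e, hK, hcover, he, hinj⟩ := h
  refine ⟨ι, hι, K, fun i x => Fin.append (e i x) 0, hK, hcover, fun i => ?_, fun i => ?_⟩
  · refine continuous_pi fun j => ?_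
    cases j using Fin.addCases <;> simp only [Fin.append_left, Fin.append_right] <;> fun_prop
  · exact fun x hx y hy hxy => hinj i hx hy <| funext fun j => by
      simpa only [Fin.append_left] using congrFun hxy (Fin.castAdd k j)

theorem PiecewiseEmbeds.unitInterval_prod (h : PiecewiseEmbeds X d) :
    PiecewiseEmbeds (unitInterval × X) (d + 1) := by
  obtain ⟨ι, hι, K, e, hK, hcover, he, hinj⟩ := h
  refine ⟨ι, hι, fun i => Prod.snd ⁻¹' K i, fun i p => Fin.cons p.1.1 (e i p.2),
    fun i => (hK i).preimage continuous_snd, ?_, fun i => ?_, fun i => ?_⟩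
  · rw [← Set.preimage_iUnion, hcover, Set.preimage_univ]
  · refine continuous_pi fun j => ?_
    cases j using Fin.cases <;> simp only [Fin.cons_zero, Fin.cons_succ] <;> fun_prop
  · rintro ⟨t, x⟩ hx ⟨t', x'⟩ hx' heq
    obtain ⟨ht, hxx⟩ := Fin.cons_injective2 heq
    exact Prod.ext (Subtype.ext ht) (hinj i hx hx' hxx)

theorem PiecewiseEmbeds.exists_extension [CompactSpace X] [Nonempty Λ] (h : PiecewiseEmbeds X d)
    (hdm : d ≤ m) {A : Set X} (hA : IsClosed A) {f : X → discreteJoin (Fin (m + 1)) Λ}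
    (hf : ContinuousOn f A) : ∃ F : C(X, discreteJoin (Fin (m + 1)) Λ), Set.EqOn F f A := by
  classical
  obtain ⟨ι, _, K, e, hK, hcover, he, hinj⟩ := h.mono hdm
  have hfinite : ∀ s : Finset ι, ∃ F : X → discreteJoin (Fin (m + 1)) Λ,
      ContinuousOn F (A ∪ ⋃ i ∈ s, K i) ∧ Set.EqOn F f A := fun s => by
    induction s using Finset.induction_on with
    | empty => exact ⟨f, by simpa using hf, Set.eqOn_refl f A⟩
    | insert i s _ ih =>
      obtain ⟨F, hF, hFf⟩ := ih
      obtain ⟨F', hF', hF'F⟩ := exists_continuousOn_union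
        (hA.union (isClosed_biUnion_finset fun i _ => hK i)) (hK i) (he i) (hinj i) hF
      rw [Finset.set_biUnion_insert, Set.union_left_comm, Set.union_comm]
      exact ⟨F', hF', (hF'F.mono Set.subset_union_left).trans hFf⟩
  have := Fintype.ofFinite ι
  obtain ⟨F, hF, hFf⟩ := hfinite Finset.univ
  have huniv : (A ∪ ⋃ i ∈ (Finset.univ : Finset ι), K i) = Set.univ := by
    simp only [Finset.mem_univ, Set.iUnion_true, hcover, Set.union_univ]
  exact ⟨⟨F, continuousOn_univ.1 (huniv ▸ hF)⟩, hFf⟩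

end PiecewiseEmbeds

end Extension

/-! ### Spaces of maps into a join -/

section MappingSpaces

open Topology
open scoped unitInterval

theorem continuousOn_extend {A X Z : Type*} [TopologicalSpace A] [TopologicalSpace X]
    [TopologicalSpace Z] {j : A → X} (hj : IsEmbedding j) {f : A → Z} (hf : Continuous f)
    (g : X → Z) : ContinuousOn (Function.extend j f g) (Set.range j) := by
  rw [continuousOn_iff_continuous_domRestrict, ← hj.toHomeomorph.comp_continuous_iff']
  exact hf.congr fun a => (hj.injective.extend_apply f g a).symm

theorem trans_homotopic_trans_of_square {Z : Type*} [TopologicalSpace Z] {z : Z} (V : C(I × I, Z))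
    {α β : Path z z} (hα₀ : ∀ s, V (s, 0) = α s) (hα₁ : ∀ s, V (s, 1) = α s)
    (hβ₀ : ∀ t, V (0, t) = β t) (hβ₁ : ∀ t, V (1, t) = β t) :
    (α.trans β).Homotopic (β.trans α) := by
  have hz₀ : z = V (0, 0) := by rw [hα₀, α.source]
  have hz₁ : z = V (1, 1) := by rw [hα₁, α.target]
  let horizontal (t : I) : Path ((0, t) : I × I) (1, t) :=
    ⟨⟨fun s => (s, t), by fun_prop⟩, rfl, rfl⟩
  let vertical (s : I) : Path ((s, 0) : I × I) (s, 1) :=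
    ⟨⟨fun t => (s, t), by fun_prop⟩, rfl, rfl⟩
  have : ContractibleSpace I :=
    (convex_Icc (0 : ℝ) 1).contractibleSpace ⟨0, unitInterval.zero_mem⟩
  have hV := ((SimplyConnectedSpace.paths_homotopic ((horizontal 0).trans (vertical 1))
    ((vertical 0).trans (horizontal 1))).map V).pathCast hz₀ hz₁
  convert hV using 1 <;> ext t <;> simp only [Path.cast_coe, Path.map_coe, Function.comp_apply,
    Path.trans_apply] <;> split_ifs
  · exact (hα₀ _).symm
  · exact (hβ₁ _).symm
  · exact (hβ₀ _).symm
  · exact (hα₁ _).symm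

/-- Precomposition with the maps of a homotopy equivalence is a homotopy equivalence of spaces of
maps. -/
def precompHomotopyEquiv {X X' : Type*} (Z : Type*) [TopologicalSpace X] [TopologicalSpace X']
    [TopologicalSpace Z] [LocallyCompactSpace X] [LocallyCompactSpace X']
    (e : ContinuousMap.HomotopyEquiv X X') : ContinuousMap.HomotopyEquiv C(X, Z) C(X', Z) where
  toFun := e.invFun.compRightContinuousMap Z
  invFun := e.toFun.compRightContinuousMap Z
  left_inv := e.left_inv.map fun H =>
    { toFun := fun p => p.2.comp (H.curry p.1)
      continuous_toFun :=
        Continuous.compCM (f := fun p => H.curry p.1) continuous_snd (by fun_prop)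
      map_zero_left := fun φ => by ext x; exact congrArg φ (H.map_zero_left x)
      map_one_left := fun φ => by ext x; exact congrArg φ (H.map_one_left x) }
  right_inv := e.right_inv.map fun H =>
    { toFun := fun p => p.2.comp (H.curry p.1)
      continuous_toFun :=
        Continuous.compCM (f := fun p => H.curry p.1) continuous_snd (by fun_prop)
      map_zero_left := fun φ => by ext x; exact congrArg φ (H.map_zero_left x)
      map_one_left := fun φ => by ext x; exact congrArg φ (H.map_one_left x) }

/-- The time coordinate is scaled down to `0` over the projection of `K`. -/
theorem exists_continuousMap_avoiding {X : Type*} [TopologicalSpace X] [NormalSpace X]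
    {K : Set (I × X)} (hK : IsClosed K) {B : Set X} (hB : IsClosed B)
    (hKB : ∀ p : I × X, p.1 = 0 ∨ p.2 ∈ B → p ∉ K) :
    ∃ r : C(I × X, I × X), (∀ p, r p ∉ K) ∧ ∀ p : I × X, p.1 = 0 ∨ p.2 ∈ B → r p = p := by
  have hdisj : Disjoint (Prod.snd '' K) B := by
    rw [Set.disjoint_left]
    rintro _ ⟨p, hp, rfl⟩ hpB
    exact hKB p (Or.inr hpB) hp
  obtain ⟨χ, hχ_K, hχ_B, hχ⟩ :=
    exists_continuous_zero_one_of_isClosed (isClosedMap_snd_of_compactSpace _ hK) hB hdisj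
  refine ⟨⟨fun p => (p.1 * ⟨χ p.2, hχ p.2⟩, p.2), by fun_prop⟩, fun p hp => ?_, fun p hp => ?_⟩
  · refine hKB _ (Or.inl (Subtype.ext ?_)) hp
    have hχp : χ p.2 = 0 := hχ_K ⟨_, hp, rfl⟩
    change (p.1 : ℝ) * χ p.2 = 0
    rw [hχp, mul_zero]
  · refine Prod.ext (Subtype.ext ?_) rfl
    change (p.1 : ℝ) * χ p.2 = p.1
    rcases hp with hp | hp
    · rw [hp, Set.Icc.coe_zero, zero_mul]
    · rw [hχ_B hp, Pi.one_apply, mul_one]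

variable {C Λ A X : Type*} [Fintype C] [Fintype Λ] [TopologicalSpace A] [TopologicalSpace X]
  [CompactSpace X]

theorem exists_homotopy_extension [T2Space X] {B : Set X} (hB : IsClosed B)
    {h : I × X → discreteJoin C Λ} (h₀ : Continuous fun x => h (0, x))
    (hh : ContinuousOn h (Set.univ ×ˢ B)) :
    ∃ H : C(I × X, discreteJoin C Λ), Set.EqOn H h {p | p.1 = 0 ∨ p.2 ∈ B} := by
  have hbottom : IsClosed {p : I × X | p.1 = 0} := isClosed_eq continuous_fst continuous_const
  have hside : IsClosed {p : I × X | p.2 ∈ B} := hB.preimage continuous_snd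
  have hcont : ContinuousOn h {p | p.1 = 0 ∨ p.2 ∈ B} :=
    .union_of_isClosed ((h₀.comp continuous_snd).continuousOn.congr fun p hp =>
      congrArg h (Prod.ext hp rfl)) (hh.mono fun p hp => ⟨trivial, hp⟩) hbottom hside
  obtain ⟨z, hz, hz_nonneg, hz_injOn, hzB⟩ := exists_continuous_injOn_support
    (hbottom.union hside) ⟨_, continuousOn_iff_continuous_domRestrict.1 hcont⟩
  replace hzB : ∀ p : I × X, p.1 = 0 ∨ p.2 ∈ B → z p = (h p).1 := fun p hp => hzB ⟨p, hp⟩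
  have hpos : ∀ p : I × X, p.1 = 0 ∨ p.2 ∈ B → 0 < ∑ v, z p v := fun p hp => by
    rw [hzB p hp, (h p).2.1.2]
    exact one_pos
  obtain ⟨r, hr, hrB⟩ := exists_continuousMap_avoiding (K := {p : I × X | ∑ v, z p v ≤ 0})
    (isClosed_le (by fun_prop) continuous_const) hB fun p hp => (hpos p hp).not_ge
  have hsum : ∀ p, 0 < ∑ v, z (r p) v := fun p => not_le.1 (hr p)
  refine ⟨⟨fun p => ⟨normalize (z (r p)), ?_⟩, ?_⟩, fun p hp => Subtype.ext ?_⟩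
  · obtain ⟨v, -, hv⟩ := Finset.exists_lt_of_sum_lt
      (Finset.sum_const_zero.trans_lt (hsum p) : ∑ _v : C × Λ, (0 : ℝ) < _)
    exact normalize_mem_discreteJoin (hz_nonneg _) (hz_injOn _) hv
  · refine Continuous.subtype_mk (continuous_pi fun v => ?_) _
    exact Continuous.div (by fun_prop) (by fun_prop) fun p => (hsum p).ne'
  · change normalize (z (r p)) = (h p).1
    rw [hrB p hp, hzB p hp, normalize_eq_self (h p).2.1.2]

/-- The homotopy extension property of a pair `(X, A)`, relative to a closed subset `D` on which the
homotopy stays constant. -/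
theorem exists_homotopy_comp_eq [T2Space X] {j : C(A, X)} (hj : IsClosedEmbedding j) {D : Set X}
    (hD : IsClosed D) (f : C(X, discreteJoin C Λ)) {K : I × A → discreteJoin C Λ}
    (hK : Continuous K) (hKf : ∀ s a, s = 0 ∨ j a ∈ D → K (s, a) = f (j a)) :
    ∃ H : C(I × X, discreteJoin C Λ), (∀ s x, s = 0 ∨ x ∈ D → H (s, x) = f x) ∧
      ∀ s a, H (s, j a) = K (s, a) := by
  let h : I × X → discreteJoin C Λ := Function.extend (Prod.map id j) K fun p => f p.2
  have h_apply : ∀ s a, h (s, j a) = K (s, a) := fun s a =>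
    (Function.injective_id.prodMap hj.injective).extend_apply K _ (s, a)
  have h_base : ∀ s x, s = 0 ∨ x ∈ D → h (s, x) = f x := fun s x hsx => by
    by_cases hx : ∃ a, j a = x
    · obtain ⟨a, rfl⟩ := hx
      rw [h_apply, hKf s a hsx]
    · exact Function.extend_apply' _ _ _ fun ⟨p, hp⟩ => hx ⟨p.2, congrArg Prod.snd hp⟩
  have h_range : ContinuousOn h (Set.univ ×ˢ Set.range j) := by
    rw [← Set.range_id, Set.prod_range_range_eq]
    exact continuousOn_extend (IsEmbedding.id.prodMap hj.isEmbedding) hK _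
  have h_D : ContinuousOn h (Set.univ ×ˢ D) :=
    (f.continuous.comp continuous_snd).continuousOn.congr fun p hp => h_base p.1 p.2 (Or.inr hp.2)
  obtain ⟨H, hH⟩ := exists_homotopy_extension (hj.isClosed_range.union hD)
    (f.continuous.congr fun x => (h_base 0 x (Or.inl rfl)).symm) (by
      rw [Set.prod_union]
      exact h_range.union_of_isClosed h_D (isClosed_univ.prod hj.isClosed_range)
        (isClosed_univ.prod hD))
  exact ⟨H, fun s x hsx => (hH (hsx.imp_right Or.inr)).trans (h_base s x hsx),
    fun s a => (hH (Or.inr (Or.inl ⟨a, rfl⟩))).trans (h_apply s a)⟩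

theorem exists_path_comp_eq [T2Space X] {j : C(A, X)} (hj : IsClosedEmbedding j)
    {e : C(X, discreteJoin C Λ)} {u : C(A, discreteJoin C Λ)} (γ : Path (e.comp j) u) :
    ∃ (E : C(X, discreteJoin C Λ)) (r : Path e E), ∀ t, (r t).comp j = γ t := by
  have := hj.isEmbedding.t2Space
  have := hj.compactSpace
  obtain ⟨H, hH_base, hH⟩ := exists_homotopy_comp_eq hj isClosed_empty e
    γ.toContinuousMap.uncurry.continuous fun s a hs => by
      obtain rfl := hs.resolve_right (Set.notMem_empty _)
      exact congrArg (· a) γ.source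
  refine ⟨H.curry 1, ⟨H.curry, ?_, rfl⟩, fun t => ?_⟩
  · ext1 x
    exact hH_base 0 x (Or.inl rfl)
  · ext1 a
    exact hH t a

theorem exists_homotopic_comp_eq [T2Space X] {j : C(A, X)} (hj : IsClosedEmbedding j)
    {f f' : C(X, discreteJoin C Λ)} (γ : Path f f') {δ : Path (f.comp j) (f'.comp j)}
    (h : (γ.map (ContinuousMap.continuous_precomp j)).Homotopic δ) :
    ∃ γ' : Path f f', γ.Homotopic γ' ∧ ∀ t, (γ' t).comp j = δ t := by
  have := hj.isEmbedding.t2Space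
  have := hj.compactSpace
  obtain ⟨Γ⟩ := h
  let Γ' : C((I × I) × A, discreteJoin C Λ) := Γ.toContinuousMap.uncurry
  obtain ⟨H, hH_base, hH⟩ := exists_homotopy_comp_eq
    (j := ContinuousMap.prodMap (.id I) j) (IsClosedEmbedding.id.prodMap hj)
    (((Set.toFinite {(0 : I), 1}).isClosed).preimage continuous_fst) γ.toContinuousMap.uncurry
    (K := fun p => Γ' ((p.1, p.2.1), p.2.2)) (by fun_prop) (by
      rintro s ⟨t, a⟩ (rfl | rfl | rfl)
      · exact congrArg (· a) (Γ.apply_zero t)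
      · exact congrArg (· a) (Γ.source s) |>.trans (congrArg (· (j a)) γ.source.symm)
      · exact congrArg (· a) (Γ.target s) |>.trans (congrArg (· (j a)) γ.target.symm))
  let H' : C(I × I, C(X, discreteJoin C Λ)) :=
    ContinuousMap.curry ⟨fun p => H (p.1.1, p.1.2, p.2), by fun_prop⟩
  have H'_base : ∀ s t, s = 0 ∨ t = 0 ∨ t = 1 → H' (s, t) = γ t := fun s t hst => by
    ext1 x
    exact hH_base s (t, x) hst
  refine ⟨⟨H'.curry 1, (H'_base 1 0 (by simp)).trans γ.source,
    (H'_base 1 1 (by simp)).trans γ.target⟩,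
    ⟨⟨H', fun t => H'_base 0 t (Or.inl rfl), fun t => rfl⟩,
      fun s t ht => H'_base s t (Or.inr ht)⟩, fun t => ?_⟩
  ext1 a
  exact (hH 1 (t, a)).trans (congrArg (· a) (Γ.apply_one t))

theorem trans_homotopic_trans_of_eq_on {Z : Type*} [TopologicalSpace Z] {A B : Set X}
    (hA : IsClosed A) (hB : IsClosed B) (hAB : A ∪ B = Set.univ) [T2Space X] {f : C(X, Z)}
    {α β : Path f f} (hα : ∀ s, ∀ x ∈ A, α s x = f x) (hβ : ∀ t, ∀ x ∈ B, β t x = f x) :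
    (α.trans β).Homotopic (β.trans α) := by
  classical
  let V : (I × I) × X → Z := fun p => if p.2 ∈ A then β p.1.2 p.2 else α p.1.1 p.2
  have V_of_mem_left : ∀ p x, x ∈ A → V (p, x) = β p.2 x := fun p x hx => if_pos hx
  have V_of_mem_right : ∀ p x, x ∈ B → V (p, x) = α p.1 x := fun p x hx => by
    by_cases hxA : x ∈ A
    · rw [V_of_mem_left p x hxA, hα _ x hxA, hβ _ x hx]
    · exact if_neg hxA
  have hmem : ∀ x, x ∈ A ∨ x ∈ B := fun x => hAB.symm.subset (Set.mem_univ x)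
  have hV : Continuous V := by
    have hcover : (Set.univ : Set ((I × I) × X)) = Prod.snd ⁻¹' A ∪ Prod.snd ⁻¹' B := by
      rw [← Set.preimage_union, hAB, Set.preimage_univ]
    rw [← continuousOn_univ, hcover]
    refine .union_of_isClosed ?_ ?_ (hA.preimage continuous_snd) (hB.preimage continuous_snd)
    · exact (by fun_prop : Continuous fun p : (I × I) × X => β p.1.2 p.2).continuousOn.congr
        fun p hp => V_of_mem_left p.1 p.2 hp
    · exact (by fun_prop : Continuous fun p : (I × I) × X => α p.1.1 p.2).continuousOn.congr
        fun p hp => V_of_mem_right p.1 p.2 hp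
  have hα_end : ∀ s t x, t = 0 ∨ t = 1 → V ((s, t), x) = α s x := fun s t x ht => by
    rcases hmem x with hx | hx
    · rcases ht with rfl | rfl <;> simp [V_of_mem_left _ x hx, hα _ x hx]
    · exact V_of_mem_right _ x hx
  have hβ_end : ∀ s t x, s = 0 ∨ s = 1 → V ((s, t), x) = β t x := fun s t x hs => by
    rcases hmem x with hx | hx
    · exact V_of_mem_left _ x hx
    · rcases hs with rfl | rfl <;> simp [V_of_mem_right _ x hx, hβ _ x hx]
  exact trans_homotopic_trans_of_square (ContinuousMap.curry ⟨V, hV⟩)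
    (fun s => ContinuousMap.ext fun x => hα_end s 0 x (Or.inl rfl))
    (fun s => ContinuousMap.ext fun x => hα_end s 1 x (Or.inr rfl))
    (fun t => ContinuousMap.ext fun x => hβ_end 0 t x (Or.inl rfl))
    (fun t => ContinuousMap.ext fun x => hβ_end 1 t x (Or.inr rfl))

/-- Two loops in the mapping space can be arranged to move only the restrictions to `B` and to `A`
respectively, so that they commute. -/
theorem trans_homotopic_trans_of_cover [T2Space X] {A B : Set X} (hA : IsClosed A)
    (hB : IsClosed B) (hAB : A ∪ B = Set.univ) [SimplyConnectedSpace C(A, discreteJoin C Λ)]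
    [SimplyConnectedSpace C(B, discreteJoin C Λ)] {f : C(X, discreteJoin C Λ)} (α β : Path f f) :
    (α.trans β).Homotopic (β.trans α) := by
  obtain ⟨α', hα, hα'⟩ := exists_homotopic_comp_eq (j := .restrict A (.id X))
    hA.isClosedEmbedding_subtypeVal α (δ := .refl _) (SimplyConnectedSpace.paths_homotopic _ _)
  obtain ⟨β', hβ, hβ'⟩ := exists_homotopic_comp_eq (j := .restrict B (.id X))
    hB.isClosedEmbedding_subtypeVal β (δ := .refl _) (SimplyConnectedSpace.paths_homotopic _ _)
  have hcomm := trans_homotopic_trans_of_eq_on hA hB hAB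
    (fun t x hx => DFunLike.congr_fun (hα' t) ⟨x, hx⟩)
    (fun t x hx => DFunLike.congr_fun (hβ' t) ⟨x, hx⟩)
  exact ((hα.hcomp hβ).trans hcomm).trans (hβ.hcomp hα).symm

instance discreteJoin.instNonempty [Nonempty C] [Nonempty Λ] : Nonempty (discreteJoin C Λ) := by
  classical
  obtain ⟨v⟩ : Nonempty (C × Λ) := inferInstance
  refine ⟨Pi.single v 1, single_mem_stdSimplex ℝ v, fun w hw w' hw' _ => ?_⟩
  rw [Pi.support_single_of_ne one_ne_zero] at hw hw'
  exact hw.trans hw'.symm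

variable [Nonempty Λ] {d m : ℕ}

theorem PiecewiseEmbeds.exists_homotopy (h : PiecewiseEmbeds X d) (hdm : d + 1 ≤ m) {B : Set X}
    (hB : IsClosed B) {f g : C(X, discreteJoin (Fin (m + 1)) Λ)} (hfg : Set.EqOn f g B) :
    ∃ H : C(I × X, discreteJoin (Fin (m + 1)) Λ), (∀ x, H (0, x) = f x) ∧ (∀ x, H (1, x) = g x) ∧
      ∀ t, ∀ x ∈ B, H (t, x) = f x := by
  classical
  let k : I × X → discreteJoin (Fin (m + 1)) Λ := fun p => if p.1 = 1 then g p.2 else f p.2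
  have k_one : ∀ x, k (1, x) = g x := fun x => if_pos rfl
  have k_eq : ∀ t x, t = 0 ∨ x ∈ B → k (t, x) = f x := fun t x htx => by
    by_cases ht : t = 1
    · subst ht
      exact (k_one x).trans (hfg (htx.resolve_left one_ne_zero)).symm
    · exact if_neg ht
  have hone : IsClosed {p : I × X | p.1 = 1} := isClosed_eq continuous_fst continuous_const
  have hrest : IsClosed {p : I × X | p.1 = 0 ∨ p.2 ∈ B} :=
    (isClosed_eq continuous_fst continuous_const).union (hB.preimage continuous_snd)
  obtain ⟨H, hH⟩ := h.unitInterval_prod.exists_extension hdm (hone.union hrest) (f := k)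
    (ContinuousOn.union_of_isClosed
      ((g.continuous.comp continuous_snd).continuousOn.congr fun p hp =>
        (congrArg (fun t => k (t, p.2)) hp).trans (k_one p.2))
      ((f.continuous.comp continuous_snd).continuousOn.congr fun p hp => k_eq p.1 p.2 hp)
      hone hrest)
  exact ⟨H, fun x => (hH (Or.inr (Or.inl rfl))).trans (k_eq 0 x (Or.inl rfl)),
    fun x => (hH (Or.inl rfl)).trans (k_one x),
    fun t x hx => (hH (Or.inr (Or.inr hx))).trans (k_eq t x (Or.inr hx))⟩

theorem PiecewiseEmbeds.simplyConnectedSpace [T2Space X] (h : PiecewiseEmbeds X d)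
    (hdm : d + 2 ≤ m) : SimplyConnectedSpace C(X, discreteJoin (Fin (m + 1)) Λ) := by
  rw [simply_connected_iff_paths_homotopic']
  refine ⟨⟨⟨.const X (Classical.arbitrary _)⟩, fun f g => ?_⟩, fun {f g} p q => ?_⟩
  · obtain ⟨H, hH₀, hH₁, -⟩ := h.exists_homotopy (by omega) isClosed_empty
      (f := f) (g := g) (Set.eqOn_empty _ _)
    exact ⟨⟨H.curry, ContinuousMap.ext hH₀, ContinuousMap.ext hH₁⟩⟩
  · obtain ⟨H, hH₀, hH₁, hH⟩ := h.unitInterval_prod.exists_homotopy (by omega)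
      (((Set.toFinite {(0 : I), 1}).isClosed).preimage continuous_fst)
      (f := p.toContinuousMap.uncurry) (g := q.toContinuousMap.uncurry) (by
        rintro ⟨t, x⟩ (rfl | rfl)
        · exact congrArg (· x) (p.source.trans q.source.symm)
        · exact congrArg (· x) (p.target.trans q.target.symm))
    exact ⟨⟨⟨ContinuousMap.curry ⟨fun r : (I × I) × X => H (r.1.1, r.1.2, r.2), by fun_prop⟩,
      fun t => ContinuousMap.ext fun x => hH₀ (t, x),
      fun t => ContinuousMap.ext fun x => hH₁ (t, x)⟩,
      fun s t ht => ContinuousMap.ext fun x => hH s (t, x) ht⟩⟩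

theorem simplyConnectedSpace_of_contractibleSpace [T2Space X] [ContractibleSpace X] (hm : 2 ≤ m) :
    SimplyConnectedSpace C(X, discreteJoin (Fin (m + 1)) Λ) :=
  have := PiecewiseEmbeds.of_subsingleton (X := Unit).simplyConnectedSpace (Λ := Λ) hm
  (precompHomotopyEquiv _ (ContractibleSpace.hequiv X Unit).some).simplyConnectedSpace

end MappingSpaces

/-! ### Affine combinations of lifts -/

section Balanced

theorem prod_mul_zpow_of_sum_eq_one {S G : Type*} [Fintype S] [CommGroup G] {a : S → ℤ}
    (ha : ∑ s, a s = 1) (c : G) (f : S → G) : ∏ s, (c * f s) ^ a s = c * ∏ s, f s ^ a s := by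
  have hc : ∀ T : Finset S, ∏ s ∈ T, c ^ a s = c ^ ∑ s ∈ T, a s := fun T => by
    classical
    induction T using Finset.induction_on with
    | empty => simp
    | insert s T hs ih => rw [Finset.prod_insert hs, Finset.sum_insert hs, zpow_add, ih]
  simp only [mul_zpow, Finset.prod_mul_distrib, hc, ha, zpow_one]

section LoopClass

variable {N : Type*} [TopologicalSpace N] {u x y : N}

/-- The class of a loop in the abelianized fundamental group. -/
def loopClass (α : Path u u) : Abelianization (FundamentalGroup N u) :=
  Abelianization.of (FundamentalGroup.fromPath (.mk α))

theorem loopClass_surjective : Function.Surjective (loopClass (u := u)) := fun c => by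
  obtain ⟨g, rfl⟩ := QuotientGroup.mk_surjective c
  obtain ⟨α, rfl⟩ := Path.Homotopic.Quotient.mk_surjective g
  exact ⟨α, rfl⟩

theorem loopClass_congr {α β : Path u u} (h : α.Homotopic β) : loopClass α = loopClass β :=
  congrArg Abelianization.of (Path.Homotopic.Quotient.eq.2 h)

theorem loopClass_trans (α β : Path u u) :
    loopClass (α.trans β) = loopClass α * loopClass β :=
  (map_mul Abelianization.of (FundamentalGroup.fromPath (.mk β))
    (FundamentalGroup.fromPath (.mk α))).trans (mul_comm _ _)

theorem loopClass_symm (α : Path u u) : loopClass α.symm = (loopClass α)⁻¹ :=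
  map_inv Abelianization.of (FundamentalGroup.fromPath (.mk α))

theorem loopClass_trans_cast (α : Path x y) (β : Path y u) (hx : u = x) (hy : u = y) :
    loopClass ((α.trans β).cast hx rfl) =
      loopClass (α.cast hx hy) * loopClass (β.cast hy rfl) := by
  subst hx hy
  exact loopClass_trans α β

theorem loopClass_map {N' : Type*} [TopologicalSpace N'] (ψ : C(N, N')) (α : Path u u) :
    loopClass (α.map ψ.continuous) =
      Abelianization.map (FundamentalGroup.map ψ u) (loopClass α) :=
  rfl

theorem homotopic_refl_of_loopClass_eq_one
    (hcomm : ∀ α β : Path u u, (α.trans β).Homotopic (β.trans α)) {α : Path u u}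
    (hα : loopClass α = 1) : α.Homotopic (.refl u) := by
  let _ : CommGroup (FundamentalGroup N u) :=
    { (inferInstance : Group (FundamentalGroup N u)) with
      mul_comm := fun g g' => by
        obtain ⟨β, rfl⟩ := Path.Homotopic.Quotient.mk_surjective g
        obtain ⟨β', rfl⟩ := Path.Homotopic.Quotient.mk_surjective g'
        exact Path.Homotopic.Quotient.eq.2 (hcomm β' β) }
  have h := congrArg (Abelianization.lift (MonoidHom.id (FundamentalGroup N u))) hα
  rw [loopClass, Abelianization.lift_apply_of, map_one] at h
  exact Path.Homotopic.Quotient.eq.1 h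

end LoopClass

variable {M N S : Type*} [TopologicalSpace M] [TopologicalSpace N] [Fintype S]

/-- Given a map `i : M → N`, points `t s` of `M` and paths `h s` from `i (t s)` to `u`, a point `E`
of `M` over `u` is balanced if the loops `u = i E ⇝ i (t s) ⇝ u`, weighted by the coefficients
`a s`, add up to zero. If `M` is simply connected, this does not depend on the choice of paths from
`E` to `t s`; when `∑ s, a s = 1`, it says that the lift `E` is the affine combination, with
coefficients `a s`, of the lifts `t s`. -/
def IsBalanced (i : C(M, N)) (t : S → M) {u : N} (h : ∀ s, Path (i (t s)) u) (a : S → ℤ) (E : M) :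
    Prop :=
  ∃ (hE : u = i E) (p : ∀ s, Path E (t s)),
    ∏ s, loopClass ((((p s).map i.continuous).trans (h s)).cast hE rfl) ^ a s = 1

variable {i : C(M, N)} {t : S → M} {u : N} {h : ∀ s, Path (i (t s)) u} {a : S → ℤ} {E E' : M}

theorem IsBalanced.map {M' N' S' : Type*} [TopologicalSpace M'] [TopologicalSpace N'] [Fintype S']
    {i' : C(M', N')} {t' : S' → M'} {u' : N'} {h' : ∀ s, Path (i' (t' s)) u'} {a' : S' → ℤ}
    (hE : IsBalanced i t h a E) (φ : C(M, M')) (ψ : C(N, N')) (σ : S' ≃ S)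
    (hi : ∀ x, i' (φ x) = ψ (i x)) (ht : ∀ s, t' s = φ (t (σ s))) (hu : u' = ψ u)
    (hh : ∀ s τ, h' s τ = ψ (h (σ s) τ)) (ha : ∀ s, a' s = a (σ s)) :
    IsBalanced i' t' h' a' (φ E) := by
  obtain ⟨hE, p, hp⟩ := hE
  subst hE hu
  refine ⟨(hi E).symm, fun s => ((p (σ s)).map φ.continuous).cast rfl (ht s), ?_⟩
  have hψ := congrArg (Abelianization.map (FundamentalGroup.map ψ (i E))) hp
  rw [map_prod, map_one, ← σ.prod_comp] at hψ
  refine (Finset.prod_congr rfl fun s _ => ?_).trans hψ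
  rw [map_zpow, ha, ← loopClass_map]
  congr 2
  ext τ
  simp only [Path.cast_coe, Path.map_coe, Function.comp_apply, Path.trans_apply]
  split_ifs
  · exact hi _
  · exact hh s _

theorem IsBalanced.exists [SimplyConnectedSpace M] (h : ∀ s, Path (i (t s)) u)
    (ha : ∑ s, a s = 1)
    (hlift : ∀ (e : M) (γ : Path (i e) u), ∃ (E : M) (r : Path e E), ∀ τ, i (r τ) = γ τ) :
    ∃ E, IsBalanced i t h a E := by
  obtain ⟨s₀, -⟩ := Finset.nonempty_of_sum_ne_zero (ha.trans_ne one_ne_zero)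
  let ρ (s : S) : Path (t s₀) (t s) := PathConnectedSpace.somePath _ _
  let ℓ (s : S) : Path u u := ((h s₀).symm.trans ((ρ s).map i.continuous)).trans (h s)
  obtain ⟨g, hg⟩ := loopClass_surjective (∏ s, loopClass (ℓ s) ^ a s)
  obtain ⟨E, r, hr⟩ := hlift _ ((h s₀).trans g)
  obtain rfl : i E = u := by simpa using hr 1
  have hr_map : r.map i.continuous = (h s₀).trans g := Path.ext (funext hr)
  have hloop : ∀ s, loopClass (((r.symm.trans (ρ s)).map i.continuous).trans (h s)) =
      (loopClass g)⁻¹ * loopClass (ℓ s) := fun s => by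
    rw [← loopClass_symm, ← loopClass_trans]
    refine loopClass_congr (Path.Homotopic.Quotient.eq.1 ?_)
    rw [Path.map_trans, ← Path.map_symm, hr_map, Path.trans_symm]
    simp only [ℓ, Path.Homotopic.Quotient.mk_trans, Path.Homotopic.Quotient.trans_assoc]
  refine ⟨E, rfl, fun s => r.symm.trans (ρ s), ?_⟩
  simp only [Path.cast_rfl_rfl, hloop]
  rw [prod_mul_zpow_of_sum_eq_one ha, hg, inv_mul_cancel]

theorem IsBalanced.homotopic [SimplyConnectedSpace M] (ha : ∑ s, a s = 1)
    (hcomm : ∀ α β : Path u u, (α.trans β).Homotopic (β.trans α)) (hE : IsBalanced i t h a E)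
    (hE' : IsBalanced i t h a E') (r : Path E E') (hu : i E = u) (hu' : i E' = u) :
    (r.map i.continuous).Homotopic ((Path.refl u).cast hu hu') := by
  obtain ⟨hEu, p, hp⟩ := hE
  obtain ⟨hEu', p', hp'⟩ := hE'
  have hloop : ∀ s, loopClass ((((p s).map i.continuous).trans (h s)).cast hEu rfl) =
      loopClass ((r.map i.continuous).cast hEu hEu') *
        loopClass ((((p' s).map i.continuous).trans (h s)).cast hEu' rfl) := fun s => by
    rw [← loopClass_trans_cast]
    refine loopClass_congr (Path.Homotopic.pathCast ?_ _ _)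
    have hrp := (SimplyConnectedSpace.paths_homotopic (p s) (r.trans (p' s))).map i
    rw [Path.map_trans] at hrp
    exact (hrp.hcomp (.refl _)).trans ⟨Path.Homotopy.transAssoc _ _ _⟩
  have hr : loopClass ((r.map i.continuous).cast hEu hEu') = 1 := by
    simpa only [hloop, prod_mul_zpow_of_sum_eq_one ha, hp', mul_one] using hp
  exact (homotopic_refl_of_loopClass_eq_one hcomm hr).pathCast hu hu'

end Balanced

/-! ### Order complexes -/

section OrderComplex

open Topology

theorem homotopic_of_segment_subset_range {X Z E : Type*} [TopologicalSpace X] [TopologicalSpace Z]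
    [AddCommGroup E] [Module ℝ E] [TopologicalSpace E] [ContinuousAdd E] [ContinuousSMul ℝ E]
    {ι : Z → E} (hι : IsEmbedding ι) {f g : C(X, Z)}
    (h : ∀ x, segment ℝ (ι (f x)) (ι (g x)) ⊆ Set.range ι) : f.Homotopic g := by
  have hmem : ∀ p : unitInterval × X,
      ∃ z, ι z = (1 - p.1 : ℝ) • ι (f p.2) + (p.1 : ℝ) • ι (g p.2) := fun p =>
    h p.2 ⟨1 - p.1, p.1, sub_nonneg.2 p.1.2.2, p.1.2.1, sub_add_cancel _ _, rfl⟩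
  choose H hH using hmem
  have hι_cont := hι.continuous
  refine ⟨⟨⟨H, hι.continuous_iff.2 ?_⟩, fun x => hι.injective ?_, fun x => hι.injective ?_⟩⟩
  · exact Continuous.congr (by fun_prop) fun p => (hH p).symm
  · simp [hH]
  · simp [hH]

theorem isClosed_setOf_support_subset {Q : Type*} (c : Set Q) :
    IsClosed {x : Q → ℝ | Function.support x ⊆ c} := by
  simp only [Function.support_subset_iff', Set.ofPred_forall]
  exact isClosed_biInter fun q _ => isClosed_eq (continuous_apply q) continuous_const

variable {Q : Type*} [Fintype Q] [PartialOrder Q] {P P' c : Set Q} {x y : Q → ℝ}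

theorem orderComplex_mono (h : P ⊆ P') : orderComplex P ⊆ orderComplex P' := fun _ hx =>
  ⟨hx.1, hx.2.1.trans h, hx.2.2⟩

theorem segment_subset_orderComplex (hc : IsChain (· ≤ ·) c) (hcP : c ⊆ P)
    (hx : x ∈ stdSimplex ℝ Q) (hxc : Function.support x ⊆ c) (hy : y ∈ stdSimplex ℝ Q)
    (hyc : Function.support y ⊆ c) : segment ℝ x y ⊆ orderComplex P := by
  intro z hz
  have hzc : Function.support z ⊆ c := by
    obtain ⟨a, b, -, -, -, rfl⟩ := hz
    exact (Function.support_add _ _).trans (Set.union_subset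
      ((Function.support_const_smul_subset a x).trans hxc)
      ((Function.support_const_smul_subset b y).trans hyc))
  exact ⟨(convex_stdSimplex ℝ Q).segment_subset hx hy hz, hzc.trans hcP, hc.mono hzc⟩

theorem isCompact_orderComplex (P : Set Q) : IsCompact (orderComplex P) := by
  have hunion : orderComplex P = ⋃ c ∈ {c : Set Q | c ⊆ P ∧ IsChain (· ≤ ·) c},
      stdSimplex ℝ Q ∩ {x | Function.support x ⊆ c} := by
    ext x
    simp only [Set.mem_iUnion₂, exists_prop]
    exact ⟨fun hx => ⟨_, hx.2, hx.1, subset_rfl (a := Function.support x)⟩,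
      fun ⟨c, hc, hx, hxc⟩ => ⟨hx, hxc.trans hc.1, hc.2.mono hxc⟩⟩
  rw [hunion]
  exact (Set.toFinite _).isCompact_biUnion fun c _ =>
    (isCompact_stdSimplex ℝ Q).inter_right (isClosed_setOf_support_subset c)

instance orderComplex.instCompactSpace (P : Set Q) : CompactSpace (orderComplex P) :=
  isCompact_iff_compactSpace.1 (isCompact_orderComplex P)

/-- The inclusion of the complex of `P` into the complex of a larger subset. -/
def orderComplex.inclusion (h : P ⊆ P') : C(orderComplex P, orderComplex P') :=
  ⟨_, continuous_inclusion (orderComplex_mono h)⟩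

theorem orderComplex.isClosedEmbedding_inclusion (h : P ⊆ P') :
    IsClosedEmbedding (orderComplex.inclusion h) :=
  .of_continuous_injective_isClosedMap (map_continuous _)
    (Set.inclusion_injective (orderComplex_mono h)) (map_continuous _).isClosedMap

instance orderComplex.instContractibleSpace (q : Q) :
    ContractibleSpace (orderComplex (Set.Iic q)) := by
  classical
  have hvertex : Function.support (Pi.single q 1 : Q → ℝ) = {q} :=
    Pi.support_single_of_ne one_ne_zero
  have hmem : Pi.single q 1 ∈ orderComplex (Set.Iic q) := by
    refine ⟨single_mem_stdSimplex ℝ q, ?_, ?_⟩ <;> rw [hvertex]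
    · exact Set.singleton_subset_iff.2 Set.self_mem_Iic
    · exact IsChain.singleton
  rw [contractible_iff_id_nullhomotopic]
  refine ⟨⟨_, hmem⟩, homotopic_of_segment_subset_range IsEmbedding.subtypeVal fun x => ?_⟩
  rw [Subtype.range_coe]
  refine segment_subset_orderComplex (x.2.2.2.insert fun r hr _ => Or.inr (x.2.2.1 hr))
    (Set.insert_subset Set.self_mem_Iic x.2.2.1) x.2.1 (Set.subset_insert _ _) hmem.1 ?_
  exact hvertex.subset.trans (Set.singleton_subset_iff.2 (Set.mem_insert _ _))

section Rank

variable {Q : Type*} [Fintype Q] {rank : Q → ℕ} {x : Q → ℝ}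

/-- The total weight of the vertices of rank `j`, in barycentric coordinates. -/
def rankWeight (rank : Q → ℕ) (j : ℕ) (x : Q → ℝ) : ℝ :=
  ∑ q with rank q = j, x q

@[fun_prop]
theorem continuous_rankWeight (rank : Q → ℕ) (j : ℕ) : Continuous (rankWeight rank j) := by
  unfold rankWeight
  fun_prop

theorem rankWeight_nonneg (hx : x ∈ stdSimplex ℝ Q) (j : ℕ) : 0 ≤ rankWeight rank j x :=
  Finset.sum_nonneg fun q _ => hx.1 q

theorem sum_rankWeight {R : Finset ℕ} (hx : x ∈ stdSimplex ℝ Q)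
    (hR : ∀ q ∈ Function.support x, rank q ∈ R) : ∑ j ∈ R, rankWeight rank j x = 1 := by
  rw [← hx.2, ← Finset.sum_filter_of_ne (p := fun q => rank q ∈ R) fun q _ hq => hR q hq,
    ← Finset.sum_fiberwise_of_maps_to (t := R) fun q hq => (Finset.mem_filter.1 hq).2]
  refine Finset.sum_congr rfl fun j hj => Finset.sum_congr ?_ fun _ _ => rfl
  ext q
  simp only [Finset.mem_filter, Finset.mem_univ, true_and]
  exact ⟨fun h => ⟨h ▸ hj, h⟩, And.right⟩

/-- The part of a barycentric coordinate vector away from the vertices of rank `k`, rescaled. -/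
def eraseRank (rank : Q → ℕ) (k : ℕ) (x : Q → ℝ) : Q → ℝ := fun q =>
  if rank q = k then 0 else x q / (1 - rankWeight rank k x)

theorem support_eraseRank_subset (k : ℕ) :
    Function.support (eraseRank rank k x) ⊆ {q ∈ Function.support x | rank q ≠ k} := fun q hq => by
  have hk : rank q ≠ k := fun hk => hq (if_pos hk)
  refine ⟨fun hx => hq ?_, hk⟩
  rw [eraseRank, if_neg hk, hx, zero_div]

theorem eraseRank_mem_stdSimplex {k : ℕ} (hx : x ∈ stdSimplex ℝ Q) (hk : rankWeight rank k x < 1) :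
    eraseRank rank k x ∈ stdSimplex ℝ Q := by
  refine ⟨fun q => ?_, ?_⟩
  · unfold eraseRank
    split_ifs
    · exact le_rfl
    · exact div_nonneg (hx.1 q) (sub_nonneg.2 hk.le)
  · have hsum : ∑ q with ¬ rank q = k, x q = 1 - rankWeight rank k x := by
      rw [eq_sub_iff_add_eq', rankWeight, Finset.sum_filter_add_sum_filter_not, hx.2]
    simp only [eraseRank, Finset.sum_ite, Finset.sum_const_zero, zero_add]
    rw [← Finset.sum_div, hsum, div_self (sub_pos.2 hk).ne']

theorem rankWeight_eq_zero {k : ℕ} (hx : ∀ q ∈ Function.support x, rank q ≠ k) :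
    rankWeight rank k x = 0 :=
  Finset.sum_eq_zero fun q hq => by
    by_contra h
    exact hx q h (Finset.mem_filter.1 hq).2

theorem eraseRank_eq_self {k : ℕ} (hx : ∀ q ∈ Function.support x, rank q ≠ k) :
    eraseRank rank k x = x := by
  funext q
  unfold eraseRank
  split_ifs with hk
  · exact (Function.notMem_support.1 fun hq => hx q hq hk).symm
  · rw [rankWeight_eq_zero hx, sub_zero, div_one]

variable [PartialOrder Q] {P c : Set Q}

theorem rankWeight_eq_apply (hrank : StrictMono rank) (hc : IsChain (· ≤ ·) c)
    (hx : Function.support x ⊆ c) {q : Q} (hq : q ∈ c) : rankWeight rank (rank q) x = x q := by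
  refine Finset.sum_eq_single_of_mem q (by simp) fun r hr hrq => ?_
  by_contra hxr
  have hrank_eq : rank r = rank q := (Finset.mem_filter.1 hr).2
  rcases hc.total (hx hxr) hq with h | h
  · exact (hrank (h.lt_of_ne hrq)).ne hrank_eq
  · exact (hrank (h.lt_of_ne' hrq)).ne' hrank_eq

/-- Each simplex embeds through the weights of all but one of the ranks. -/
theorem piecewiseEmbeds_orderComplex {Q : Type} [Fintype Q] [PartialOrder Q] {P : Set Q}
    {rank : Q → ℕ} (hrank : StrictMono rank) {T : Finset ℕ} {r₀ : ℕ} (hr₀ : r₀ ∉ T)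
    (hP : ∀ q ∈ P, rank q ∈ insert r₀ T) : PiecewiseEmbeds (orderComplex P) T.card := by
  refine ⟨{c : Set Q // IsChain (· ≤ ·) c}, inferInstance,
    fun c => {x | Function.support x.1 ⊆ c.1}, fun _ x j => rankWeight rank (T.equivFin.symm j) x,
    fun c => (isClosed_setOf_support_subset c.1).preimage continuous_subtype_val,
    Set.eq_univ_of_forall fun x => Set.mem_iUnion.2 ⟨⟨_, x.2.2.2⟩, (subset_rfl :
      Function.support x.1 ⊆ _)⟩, fun _ => by fun_prop, ?_⟩
  rintro ⟨c, hc⟩ x hx y hy hxy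
  have hT : ∀ j ∈ T, rankWeight rank j x = rankWeight rank j y := fun j hj => by
    simpa using congrFun hxy (T.equivFin ⟨j, hj⟩)
  have hsum : ∀ z : orderComplex P, rankWeight rank r₀ z + ∑ j ∈ T, rankWeight rank j z = 1 :=
    fun z => (Finset.sum_insert hr₀).symm.trans
      (sum_rankWeight z.2.1 fun q hq => hP q (z.2.2.1 hq))
  have hr₀_eq : rankWeight rank r₀ x = rankWeight rank r₀ y := by
    have hxy := (hsum x).trans (hsum y).symm
    rwa [Finset.sum_congr rfl hT, add_left_inj] at hxy
  refine Subtype.ext (funext fun q => ?_)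
  by_cases hq : q ∈ c ∩ P
  · rw [← rankWeight_eq_apply hrank hc hx hq.1, ← rankWeight_eq_apply hrank hc hy hq.1]
    rcases Finset.mem_insert.1 (hP q hq.2) with h | h
    · rw [h, hr₀_eq]
    · exact hT _ h
  · rw [Function.notMem_support.1 fun h => hq ⟨hx h, x.2.2.1 h⟩,
      Function.notMem_support.1 fun h => hq ⟨hy h, y.2.2.1 h⟩]

theorem segment_subset_of_rankWeight_le {k : ℕ} {b : ℝ} (hx : x ∈ orderComplex P)
    (hxb : rankWeight rank k x ≤ b) (hb : b < 1) (hb₀ : 0 ≤ b) :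
    segment ℝ (eraseRank rank k x) x ⊆ {y ∈ orderComplex P | rankWeight rank k y ≤ b} := by
  have hsupp := support_eraseRank_subset (x := x) (rank := rank) k
  refine fun y hy => ⟨segment_subset_orderComplex hx.2.2 hx.2.1
    (eraseRank_mem_stdSimplex hx.1 (hxb.trans_lt hb)) (fun q hq => (hsupp hq).1) hx.1
    subset_rfl hy, ?_⟩
  have hconvex : Convex ℝ {y : Q → ℝ | rankWeight rank k y ≤ b} :=
    convex_halfSpace_le ⟨fun x y => by simp [rankWeight, Finset.sum_add_distrib],
      fun c x => by simp [rankWeight, Finset.mul_sum]⟩ b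
  exact hconvex.segment_subset
    ((rankWeight_eq_zero fun q hq => (hsupp hq).2).trans_le hb₀ : _ ≤ b) hxb hy

theorem nonempty_homotopyEquiv_rankWeight_le (P : Set Q) (rank : Q → ℕ) (k : ℕ) {b : ℝ}
    (hb : b < 1) (hb₀ : 0 ≤ b) :
    Nonempty (ContinuousMap.HomotopyEquiv {x : orderComplex P | rankWeight rank k x ≤ b}
      (orderComplex {q ∈ P | rank q ≠ k})) := by
  have hsupp : ∀ x, Function.support (eraseRank rank k x) ⊆
    {q ∈ Function.support x | rank q ≠ k} := fun x => support_eraseRank_subset k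
  let retraction : C({x : orderComplex P | rankWeight rank k x ≤ b},
      orderComplex {q ∈ P | rank q ≠ k}) :=
    { toFun := fun x => ⟨eraseRank rank k x.1,
        eraseRank_mem_stdSimplex x.1.2.1 (x.2.trans_lt hb),
        (hsupp x.1).trans fun q hq => ⟨x.1.2.2.1 hq.1, hq.2⟩,
        x.1.2.2.2.mono fun q hq => (hsupp x.1 hq).1⟩
      continuous_toFun := by
        refine .subtype_mk (continuous_pi fun q => ?_) _
        unfold eraseRank
        split_ifs
        · exact continuous_const
        · exact .div ((continuous_apply q).comp (by fun_prop)) (by fun_prop) fun x =>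
            (sub_pos.2 (x.2.trans_lt hb)).ne' }
  let inclusion : C(orderComplex {q ∈ P | rank q ≠ k},
      {x : orderComplex P | rankWeight rank k x ≤ b}) :=
    { toFun := fun x => ⟨orderComplex.inclusion (fun _ hq => hq.1) x,
        (rankWeight_eq_zero fun q hq => (x.2.2.1 hq).2).trans_le hb₀⟩
      continuous_toFun := by fun_prop }
  refine ⟨retraction, inclusion, ?_, ?_⟩
  · refine homotopic_of_segment_subset_range (ι := fun x => x.1.1)
      (IsEmbedding.subtypeVal.comp IsEmbedding.subtypeVal) fun x y hy => ?_
    obtain ⟨hyP, hyb⟩ := segment_subset_of_rankWeight_le x.1.2 x.2 hb hb₀ hy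
    exact ⟨⟨⟨y, hyP⟩, hyb⟩, rfl⟩
  · have hid : retraction.comp inclusion = .id _ := ContinuousMap.ext fun x => Subtype.ext <|
      eraseRank_eq_self fun q hq => (x.2.2.1 hq).2
    rw [hid]

theorem trans_homotopic_trans_of_rank_lt {Q : Type} [Fintype Q] [PartialOrder Q] {P : Set Q}
    {rank : Q → ℕ} (hrank : StrictMono rank) {Λ : Type*} [Fintype Λ] [Nonempty Λ] {m : ℕ}
    (hm : 2 ≤ m) (hP : ∀ q ∈ P, rank q < m)
    {f : C(orderComplex P, discreteJoin (Fin (m + 1)) Λ)} (α β : Path f f) :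
    (α.trans β).Homotopic (β.trans α) := by
  have hclosed : ∀ k, IsClosed {x : orderComplex P | rankWeight rank k x ≤ 1 / 2} := fun k =>
    isClosed_le (by fun_prop) continuous_const
  have hsimply : ∀ k < 2, SimplyConnectedSpace
      C({x : orderComplex P | rankWeight rank k x ≤ 1 / 2}, discreteJoin (Fin (m + 1)) Λ) :=
    fun k hk => by
      have hk_mem : k ∈ Finset.range m := by grind
      have hr_mem : 1 - k ∈ (Finset.range m).erase k := by grind
      have hpieces := piecewiseEmbeds_orderComplex (P := {q ∈ P | rank q ≠ k}) hrank
        (Finset.notMem_erase (1 - k) ((Finset.range m).erase k)) fun q hq => by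
          rw [Finset.insert_erase hr_mem]
          exact Finset.mem_erase.2 ⟨hq.2, Finset.mem_range.2 (hP q hq.1)⟩
      have hcard : (((Finset.range m).erase k).erase (1 - k)).card + 2 ≤ m := by
        rw [Finset.card_erase_of_mem hr_mem, Finset.card_erase_of_mem hk_mem, Finset.card_range]
        omega
      obtain ⟨e⟩ := nonempty_homotopyEquiv_rankWeight_le P rank k (b := 1 / 2)
        (by norm_num) (by norm_num)
      have := hpieces.simplyConnectedSpace (Λ := Λ) hcard
      have : CompactSpace {x : orderComplex P | rankWeight rank k x ≤ 1 / 2} :=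
        isCompact_iff_compactSpace.1 (hclosed k).isCompact
      exact (precompHomotopyEquiv _ e).simplyConnectedSpace
  have hle : ∀ x : orderComplex P, rankWeight rank 0 x + rankWeight rank 1 x ≤ 1 := fun x => by
    rw [← Finset.sum_pair (f := fun j => rankWeight rank j x.1) zero_ne_one,
      ← sum_rankWeight x.2.1 fun q hq => Finset.mem_range.2 (hP q (x.2.2.1 hq))]
    exact Finset.sum_le_sum_of_subset_of_nonneg (by grind)
      fun j _ _ => rankWeight_nonneg x.2.1 j
  have := hsimply 0 two_pos
  have := hsimply 1 one_lt_two
  refine trans_homotopic_trans_of_cover (hclosed 0) (hclosed 1) ?_ α β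
  refine Set.eq_univ_of_forall fun x => ?_
  by_contra! hx
  simp only [Set.mem_union, Set.mem_ofPred_eq, not_or, not_le] at hx
  linarith [hle x]

end Rank

end OrderComplex

/-! ### Colourings of a graded poset -/

section ColouredPoset

open scoped unitInterval

section LinearMap

theorem linearMap_sumElim {X X' V : Type*} [Finite X] [Finite X'] [Finite V] (v : X → V)
    (v' : X' → V) (x : X → ℝ) (x' : X' → ℝ) :
    FunOnFinite.linearMap ℝ ℝ (Sum.elim v v') (Sum.elim x x') =
      FunOnFinite.linearMap ℝ ℝ v x + FunOnFinite.linearMap ℝ ℝ v' x' := by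
  classical
  have := Fintype.ofFinite X
  have := Fintype.ofFinite X'
  funext w
  rw [Pi.add_apply]
  simp only [FunOnFinite.linearMap_apply_apply, Finset.sum_filter]
  exact Fintype.sum_sum_type _

theorem linearMap_smul {X V G : Type*} [Finite X] [Finite V] [Group G] [MulAction G X]
    [MulAction G V] {v v' : X → V} {g : G} (hv : ∀ q, v' (g • q) = g • v q) (x : X → ℝ) :
    FunOnFinite.linearMap ℝ ℝ v' (g • x) = g • FunOnFinite.linearMap ℝ ℝ v x := by
  classical
  have := Fintype.ofFinite X
  funext w
  change _ = FunOnFinite.linearMap ℝ ℝ v x (g⁻¹ • w)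
  simp only [FunOnFinite.linearMap_apply_apply]
  refine Finset.sum_equiv (MulAction.toPerm g⁻¹) (fun q => ?_) fun q _ => rfl
  simp only [Finset.mem_filter, Finset.mem_univ, true_and, MulAction.toPerm_apply]
  rw [eq_inv_smul_iff, ← hv, smul_inv_smul]

theorem linearMap_eq_smul_inv_smul {X V G : Type*} [Finite X] [Finite V] [Group G] [MulAction G X]
    [MulAction G V] {v v' : X → V} {g : G} (hv : ∀ q, v' (g • q) = g • v q) (x : X → ℝ) :
    FunOnFinite.linearMap ℝ ℝ v' x = g • FunOnFinite.linearMap ℝ ℝ v (g⁻¹ • x) := by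
  rw [← linearMap_smul hv, smul_inv_smul]

theorem linearMap_mem_discreteJoin {X C Λ : Type*} [Fintype X] [Fintype C] [Fintype Λ]
    {v : X → C × Λ} {x : X → ℝ} (hx : x ∈ stdSimplex ℝ X)
    (hv : ∀ q ∈ Function.support x, ∀ q' ∈ Function.support x,
      (v q).1 = (v q').1 → (v q).2 = (v q').2) :
    FunOnFinite.linearMap ℝ ℝ v x ∈ discreteJoin C Λ := by
  classical
  have hsupp : ∀ w ∈ Function.support (FunOnFinite.linearMap ℝ ℝ v x),
      ∃ q ∈ Function.support x, v q = w := fun w hw => by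
    rw [Function.mem_support, FunOnFinite.linearMap_apply_apply] at hw
    obtain ⟨q, hq, hxq⟩ := Finset.exists_ne_zero_of_sum_ne_zero hw
    exact ⟨q, hxq, (Finset.mem_filter.1 hq).2⟩
  refine ⟨stdSimplex.image_linearMap v ⟨x, hx, rfl⟩, fun w hw w' hw' hww' => ?_⟩
  obtain ⟨q, hq, rfl⟩ := hsupp w hw
  obtain ⟨q', hq', rfl⟩ := hsupp w' hw'
  exact Prod.ext hww' (hv q hq q' hq' hww')

end LinearMap

section LowPart

variable {Q G : Type*} [Fintype Q] [Group G] [MulAction G Q] {rank : Q → ℕ} {x : Q → ℝ}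

/-- The part of a barycentric coordinate vector formed by its first `1 - τ` units of weight, taken
in order of increasing rank. -/
def lowPart (rank : Q → ℕ) (τ : ℝ) (x : Q → ℝ) : Q → ℝ := fun q =>
  min (x q) (max 0 (1 - τ - ∑ r with rank r < rank q, x r))

@[fun_prop]
theorem continuous_lowPart (rank : Q → ℕ) :
    Continuous fun p : ℝ × (Q → ℝ) => lowPart rank p.1 p.2 := by
  unfold lowPart
  fun_prop

theorem lowPart_nonneg (hx : ∀ q, 0 ≤ x q) (τ : ℝ) (q : Q) : 0 ≤ lowPart rank τ x q :=
  le_min (hx q) (le_max_left _ _)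

theorem lowPart_le (τ : ℝ) (q : Q) : lowPart rank τ x q ≤ x q :=
  min_le_left _ _

theorem apply_add_sum_rank_lt_le {q q' : Q} (hx : ∀ q, 0 ≤ x q) (h : rank q < rank q') :
    x q + ∑ r with rank r < rank q, x r ≤ ∑ r with rank r < rank q', x r := by
  classical
  rw [← Finset.sum_insert (by simp)]
  refine Finset.sum_le_sum_of_subset_of_nonneg (fun r hr => ?_) fun r _ _ => hx r
  rw [Finset.mem_filter]
  rcases Finset.mem_insert.1 hr with rfl | hr
  · exact ⟨Finset.mem_univ _, h⟩
  · exact ⟨Finset.mem_univ _, (Finset.mem_filter.1 hr).2.trans h⟩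

theorem lowPart_zero (hx : x ∈ stdSimplex ℝ Q) : lowPart rank 0 x = x := by
  classical
  funext q
  have hsum : x q + ∑ r with rank r < rank q, x r ≤ 1 := by
    rw [← hx.2, ← Finset.sum_insert (by simp)]
    exact Finset.sum_le_sum_of_subset_of_nonneg (Finset.subset_univ _) fun r _ _ => hx.1 r
  exact min_eq_left (le_max_of_le_right (by linarith))

theorem lowPart_one (hx : ∀ q, 0 ≤ x q) : lowPart rank 1 x = 0 := by
  funext q
  have hsum : 0 ≤ ∑ r with rank r < rank q, x r := Finset.sum_nonneg fun r _ => hx r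
  rw [lowPart, max_eq_left (by linarith), min_eq_right (hx q), Pi.zero_apply]

theorem rank_le_of_lowPart {τ : ℝ} {q q' : Q} (hx : ∀ q, 0 ≤ x q)
    (hq : lowPart rank τ x q ≠ 0) (hq' : x q' ≠ lowPart rank τ x q') : rank q ≤ rank q' := by
  contrapose! hq
  have hcut : max 0 (1 - τ - ∑ r with rank r < rank q', x r) < x q' :=
    not_le.1 fun h => hq' (min_eq_left h).symm
  have hsum := apply_add_sum_rank_lt_le hx hq
  have hcut' := (le_max_right _ _).trans_lt hcut
  rw [lowPart, max_eq_left (by linarith), min_eq_right (hx q)]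

theorem lowPart_smul (hrank : ∀ (g : G) q, rank (g • q) = rank q) (g : G) (τ : ℝ) :
    lowPart rank τ (g • x) = g • lowPart rank τ x := by
  funext q
  have hsum : ∑ r with rank r < rank q, x (g⁻¹ • r) =
      ∑ r with rank r < rank (g⁻¹ • q), x r :=
    Finset.sum_equiv (MulAction.toPerm g⁻¹) (fun r => by simp [hrank]) fun r _ => rfl
  change min (x (g⁻¹ • q)) (max 0 (1 - τ - ∑ r with rank r < rank q, x (g⁻¹ • r))) = _
  rw [hsum]
  rfl

end LowPart

/-- A poset `Q` with a group `G` acting on it, an equivariant rank function with values at most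
`m + 1`, an equivariant labelling by `G`, and a family of labellings, permuted by the group,
which depend only on a coarser grading. -/
structure ColouredPoset (G Q S : Type*) [Group G] [PartialOrder Q] [MulAction G Q] [MulAction G S]
    (m : ℕ) where
  rank : Q → ℕ
  label : Q → G
  level : S → Q → Fin (m + 1)
  levelLabel : S → Q → G
  smul_le_smul (g : G) {q q' : Q} : q ≤ q' → g • q ≤ g • q'
  rank_strictMono : StrictMono rank
  rank_le (q : Q) : rank q ≤ m + 1
  level_le_rank (s : S) (q : Q) : (level s q : ℕ) ≤ rank q
  levelLabel_eq (s : S) {q q' : Q} :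
    q ≤ q' → level s q = level s q' → levelLabel s q = levelLabel s q'
  rank_smul (g : G) (q : Q) : rank (g • q) = rank q
  label_smul (g : G) (q : Q) : label (g • q) = g * label q
  level_smul (g : G) (s : S) (q : Q) : level (g • s) (g • q) = level s q
  levelLabel_smul (g : G) (s : S) (q : Q) : levelLabel (g • s) (g • q) = g * levelLabel s q

/-- The action of `G` on the vertices of the join of copies of `G`. -/
abbrev joinAction (C G : Type*) [Group G] : MulAction G (C × G) where
  smul g v := (v.1, g * v.2)
  one_smul v := Prod.ext rfl (one_mul v.2)
  mul_smul g g' v := Prod.ext rfl (mul_assoc g g' v.2)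

attribute [local instance] joinAction

theorem smul_mem_discreteJoin {C G : Type*} [Fintype C] [Group G] [Fintype G] {y : C × G → ℝ}
    (hy : y ∈ discreteJoin C G) (g : G) : g • y ∈ discreteJoin C G := by
  refine ⟨⟨fun v => hy.1.1 _, ?_⟩, fun v hv w hw hvw => ?_⟩
  · exact (Equiv.sum_comp (MulAction.toPerm g⁻¹) y).trans hy.1.2
  · exact MulAction.injective g⁻¹ (hy.2 hv hw hvw)

namespace ColouredPoset

variable {G Q S : Type*} [Group G] [PartialOrder Q] [MulAction G Q] [MulAction G S] {m : ℕ}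
  (D : ColouredPoset G Q S m)

/-- Vertices of rank below `m` are sent to copies of `G` of index one more than the rank, which are
never used by a colouring for vertices of at most this rank. -/
def labelVertex (q : Q) : Fin (m + 1) × G :=
  (Fin.ofNat (m + 1) (D.rank q + 1), D.label q)

/-- The vertices of the join given by the labelling `s`. -/
def levelVertex (s : S) (q : Q) : Fin (m + 1) × G :=
  (D.level s q, D.levelLabel s q)

theorem labelVertex_smul (g : G) (q : Q) : D.labelVertex (g • q) = g • D.labelVertex q := by
  rw [labelVertex, D.rank_smul, D.label_smul]
  rfl

theorem levelVertex_smul (g : G) (s : S) (q : Q) :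
    D.levelVertex (g • s) (g • q) = g • D.levelVertex s q := by
  rw [levelVertex, D.level_smul, D.levelLabel_smul]
  rfl

theorem val_labelVertex_fst {q : Q} (hq : D.rank q < m) :
    ((D.labelVertex q).1 : ℕ) = D.rank q + 1 :=
  Nat.mod_eq_of_lt (Nat.succ_lt_succ hq)

theorem labelVertex_snd_eq {q q' : Q} (hle : q ≤ q' ∨ q' ≤ q) (hq : D.rank q < m)
    (hq' : D.rank q' < m) (h : (D.labelVertex q).1 = (D.labelVertex q').1) :
    (D.labelVertex q).2 = (D.labelVertex q').2 := by
  have hrank : D.rank q = D.rank q' := by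
    have hval := congrArg Fin.val h
    rwa [D.val_labelVertex_fst hq, D.val_labelVertex_fst hq', Nat.succ_inj] at hval
  rcases hle with hle | hle
  · rw [hle.eq_of_not_lt fun hlt => (D.rank_strictMono hlt).ne hrank]
  · rw [hle.eq_of_not_lt fun hlt => (D.rank_strictMono hlt).ne' hrank]

theorem levelVertex_snd_eq (s : S) {q q' : Q} (hle : q ≤ q' ∨ q' ≤ q)
    (h : (D.levelVertex s q).1 = (D.levelVertex s q').1) :
    (D.levelVertex s q).2 = (D.levelVertex s q').2 := by
  rcases hle with hle | hle
  · exact D.levelLabel_eq s hle h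
  · exact (D.levelLabel_eq s hle h.symm).symm

variable [Fintype Q] [Fintype G] {P : Set Q} {x : Q → ℝ}

/-- Moves the first `1 - τ` units of weight of a point according to the colouring `s`, and the rest
according to the equivariant labelling. -/
def deform (s : S) (τ : ℝ) (x : Q → ℝ) : Fin (m + 1) × G → ℝ :=
  FunOnFinite.linearMap ℝ ℝ (Sum.elim (D.levelVertex s) D.labelVertex)
    (Sum.elim (lowPart D.rank τ x) (x - lowPart D.rank τ x))

theorem continuous_deform (s : S) : Continuous fun p : ℝ × (Q → ℝ) => D.deform s p.1 p.2 := by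
  refine (FunOnFinite.continuous_linearMap ℝ ℝ _).comp (continuous_pi ?_)
  rintro (q | q) <;> simp only [Sum.elim_inl, Sum.elim_inr, Pi.sub_apply] <;> fun_prop

theorem deform_zero (s : S) (hx : x ∈ stdSimplex ℝ Q) :
    D.deform s 0 x = FunOnFinite.linearMap ℝ ℝ (D.levelVertex s) x := by
  rw [deform, lowPart_zero hx, sub_self, linearMap_sumElim, map_zero, add_zero]

theorem deform_one (s : S) (hx : x ∈ stdSimplex ℝ Q) :
    D.deform s 1 x = FunOnFinite.linearMap ℝ ℝ D.labelVertex x := by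
  rw [deform, lowPart_one hx.1, sub_zero, linearMap_sumElim, map_zero, zero_add]

theorem deform_smul (g : G) (s : S) (τ : ℝ) :
    D.deform (g • s) τ (g • x) = g • D.deform s τ x := by
  have hsub : g • x - g • lowPart D.rank τ x = g • (x - lowPart D.rank τ x) := rfl
  rw [deform, deform, linearMap_sumElim, linearMap_sumElim, lowPart_smul D.rank_smul, hsub,
    linearMap_smul (D.levelVertex_smul g s), linearMap_smul (D.labelVertex_smul g)]
  rfl

theorem levelMap_mem (s : S) (hx : x ∈ orderComplex P) :
    FunOnFinite.linearMap ℝ ℝ (D.levelVertex s) x ∈ discreteJoin (Fin (m + 1)) G :=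
  linearMap_mem_discreteJoin hx.1 fun _ hq _ hq' =>
    D.levelVertex_snd_eq s (hx.2.2.total hq hq')

theorem labelMap_mem (hP : ∀ q ∈ P, D.rank q < m) (hx : x ∈ orderComplex P) :
    FunOnFinite.linearMap ℝ ℝ D.labelVertex x ∈ discreteJoin (Fin (m + 1)) G :=
  linearMap_mem_discreteJoin hx.1 fun q hq q' hq' =>
    D.labelVertex_snd_eq (hx.2.2.total hq hq') (hP q (hx.2.1 hq)) (hP q' (hx.2.1 hq'))

theorem deform_mem (hP : ∀ q ∈ P, D.rank q < m) (s : S) (τ : ℝ) (hx : x ∈ orderComplex P) :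
    D.deform s τ x ∈ discreteJoin (Fin (m + 1)) G := by
  have hlow : ∀ {q}, lowPart D.rank τ x q ≠ 0 → q ∈ Function.support x := fun {q} hq hxq =>
    hq (((lowPart_le τ q).trans_eq hxq).antisymm (lowPart_nonneg hx.1.1 τ q))
  have hhigh : ∀ {q}, (x - lowPart D.rank τ x) q ≠ 0 → q ∈ Function.support x := fun {q} hq hxq =>
    hlow (fun h => hq (by rw [Pi.sub_apply, hxq, h, sub_zero])) hxq
  refine linearMap_mem_discreteJoin ⟨?_, ?_⟩ ?_
  · rintro (q | q)
    · exact lowPart_nonneg hx.1.1 τ q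
    · exact sub_nonneg.2 (lowPart_le τ q)
  · simp [Fintype.sum_sum_type, hx.1.2]
  have hdisj : ∀ {q q'}, lowPart D.rank τ x q ≠ 0 → (x - lowPart D.rank τ x) q' ≠ 0 →
      (D.levelVertex s q).1 ≠ (D.labelVertex q').1 := fun {q q'} hq hq' h => by
    have hle := (D.level_le_rank s q).trans (rank_le_of_lowPart hx.1.1 hq (sub_ne_zero.1 hq'))
    have hval := congrArg Fin.val h
    rw [D.val_labelVertex_fst (hP _ (hx.2.1 (hhigh hq')))] at hval
    exact absurd (hval.symm.trans_le hle) (Nat.not_succ_le_self _)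
  rintro (q | q) hq (q' | q') hq' h
  · exact D.levelVertex_snd_eq s (hx.2.2.total (hlow hq) (hlow hq')) h
  · exact absurd h (hdisj hq hq')
  · exact absurd h.symm (hdisj hq' hq)
  · exact D.labelVertex_snd_eq (hx.2.2.total (hhigh hq) (hhigh hq'))
      (hP q (hx.2.1 (hhigh hq))) (hP q' (hx.2.1 (hhigh hq'))) h

/-- The map of complexes given by the labelling `s`. -/
def levelMap (s : S) (P : Set Q) : C(orderComplex P, discreteJoin (Fin (m + 1)) G) where
  toFun x := ⟨_, D.levelMap_mem s x.2⟩
  continuous_toFun := by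
    have := FunOnFinite.continuous_linearMap ℝ ℝ (D.levelVertex s)
    fun_prop

/-- The map given by the equivariant labelling, on complexes of elements of rank less than `m`. -/
def labelMap (hP : ∀ q ∈ P, D.rank q < m) :
    C(orderComplex P, discreteJoin (Fin (m + 1)) G) where
  toFun x := ⟨_, D.labelMap_mem hP x.2⟩
  continuous_toFun := by
    have := FunOnFinite.continuous_linearMap ℝ ℝ D.labelVertex
    fun_prop

/-- On elements of rank less than `m`, the map given by the labelling `s` is homotopic to the one
given by the equivariant labelling. -/
def deformPath (s : S) {P' : Set Q} (h : P ⊆ P') (hP : ∀ q ∈ P, D.rank q < m) :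
    Path ((D.levelMap s P').comp (orderComplex.inclusion h)) (D.labelMap hP) where
  toFun := ContinuousMap.curry
    ⟨fun p : I × orderComplex P => ⟨D.deform s p.1 p.2, D.deform_mem hP s p.1 p.2.2⟩,
      ((D.continuous_deform s).comp (by fun_prop :
        Continuous fun p : I × orderComplex P => ((p.1 : ℝ), (p.2 : Q → ℝ)))).subtype_mk _⟩
  source' := by exact ContinuousMap.ext fun x => Subtype.ext (D.deform_zero s x.2.1)
  target' := by exact ContinuousMap.ext fun x => Subtype.ext (D.deform_one s x.2.1)

end ColouredPoset

end ColouredPoset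

/-! ### Equivariant maps to the join -/

section EquivariantMap

open scoped unitInterval

attribute [local instance] joinAction

theorem exists_equivariant_family {G Q X Y : Type*} [Group G] [MulAction G Q] [MulAction G X]
    [MulAction G Y] {label : Q → G} (hlabel : ∀ g q, label (g • q) = g * label q)
    {Φ : Q → (X → Y) → Prop} (hΦ : ∀ (g : G) q E, Φ q E → Φ (g • q) fun x => g • E (g⁻¹ • x))
    (hex : ∀ q, ∃ E, Φ q E) :
    ∃ F : Q → X → Y, (∀ q, Φ q (F q)) ∧ ∀ (g : G) q x, F (g • q) (g • x) = g • F q x := by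
  choose E hE using hex
  refine ⟨fun q x => label q • E ((label q)⁻¹ • q) ((label q)⁻¹ • x), fun q => ?_, fun g q x => ?_⟩
  · simpa only [smul_inv_smul] using hΦ (label q) _ _ (hE ((label q)⁻¹ • q))
  · simp only [hlabel, mul_inv_rev, mul_smul, inv_smul_smul]

theorem continuous_arrow_smul {G X Y : Type*} [Group G] [MulAction G X] [TopologicalSpace Y]
    (g : G) : Continuous fun x : X → Y => g • x :=
  continuous_pi fun _ => continuous_apply _

theorem exists_mem_orderComplex_Iic {Q : Type*} [Fintype Q] [PartialOrder Q] {P : Set Q} {x : Q → ℝ}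
    (hx : x ∈ orderComplex P) : ∃ q, x q ≠ 0 ∧ x ∈ orderComplex (Set.Iic q) := by
  obtain ⟨q, hq, hmax⟩ := (Set.toFinite (Function.support x)).exists_maximal <| by
    rw [Function.support_nonempty_iff]
    rintro rfl
    simpa using hx.1.2
  exact ⟨q, hq, hx.1, fun r hr => (hx.2.2.total hr hq).elim id (hmax hr), hx.2.2⟩

theorem exists_continuous_orderComplex {Q Y : Type*} [Fintype Q] [PartialOrder Q]
    [TopologicalSpace Y] {E : Q → (Q → ℝ) → Y}
    (hE : ∀ q, ContinuousOn (E q) (orderComplex (Set.Iic q)))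
    (hcompat : ∀ q, ∀ q' ≤ q, Set.EqOn (E q) (E q') (orderComplex (Set.Iic q'))) :
    ∃ Ψ : orderComplex (Set.univ : Set Q) → Y, Continuous Ψ ∧
      ∀ q (x : orderComplex Set.univ), x.1 ∈ orderComplex (Set.Iic q) → Ψ x = E q x := by
  choose top htop htop_mem using fun x : orderComplex (Set.univ : Set Q) =>
    exists_mem_orderComplex_Iic x.2
  have heq : ∀ q (x : orderComplex Set.univ), x.1 ∈ orderComplex (Set.Iic q) →
      E (top x) x = E q x := fun q x hx =>
    (hcompat q (top x) (hx.2.1 (htop x)) (htop_mem x)).symm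
  refine ⟨fun x => E (top x) x, ?_, heq⟩
  refine (locallyFinite_of_finite fun q : Q => {x : orderComplex (Set.univ : Set Q) |
      x.1 ∈ orderComplex (Set.Iic q)}).continuous
    (Set.eq_univ_of_forall fun x => Set.mem_iUnion.2 ⟨top x, htop_mem x⟩)
    (fun q => (isCompact_orderComplex _).isClosed.preimage continuous_subtype_val) fun q => ?_
  exact ((hE q).comp continuous_subtype_val.continuousOn fun x hx => hx).congr (heq q)

section Conjugation

variable {G Q C : Type*} [Group G] [Fintype Q] [PartialOrder Q] [MulAction G Q]
  {P P' : Set Q} {g : G}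

theorem smul_mem_orderComplex (hle : ∀ q q' : Q, q ≤ q' → g • q ≤ g • q')
    (hP : ∀ q ∈ P, g • q ∈ P') {x : Q → ℝ} (hx : x ∈ orderComplex P) :
    g • x ∈ orderComplex P' := by
  have hmem : ∀ {r}, r ∈ Function.support (g • x) → g⁻¹ • r ∈ Function.support x := id
  refine ⟨⟨fun r => hx.1.1 _, (Equiv.sum_comp (MulAction.toPerm g⁻¹) x).trans hx.1.2⟩,
    fun r hr => ?_, fun r hr r' hr' _ => ?_⟩
  · simpa only [smul_inv_smul] using hP _ (hx.2.1 (hmem hr))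
  · refine (hx.2.2.total (hmem hr) (hmem hr')).imp (fun h => ?_) fun h => ?_ <;>
    simpa only [smul_inv_smul] using hle _ _ h

variable [Fintype C] [Fintype G]

/-- The map `f ↦ (x ↦ g • f (g⁻¹ • x))` between spaces of maps. -/
def conj (g : G) (h : Set.MapsTo (g⁻¹ • ·) (orderComplex P') (orderComplex P)) :
    C(C(orderComplex P, discreteJoin C G), C(orderComplex P', discreteJoin C G)) :=
  .comp
    ⟨_, ContinuousMap.continuous_postcomp ⟨fun y => ⟨g • y.1, smul_mem_discreteJoin y.2 g⟩,
      ((continuous_arrow_smul g).comp continuous_subtype_val).subtype_mk _⟩⟩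
    ⟨_, ContinuousMap.continuous_precomp
      ⟨_, (continuous_arrow_smul g⁻¹).continuousOn.mapsToRestrict h⟩⟩

end Conjugation

namespace ColouredPoset

section

variable {G Q S : Type*} [Group G] [PartialOrder Q] [MulAction G Q] [MulAction G S] {m : ℕ}
  (D : ColouredPoset G Q S m) {P P' : Set Q} {q q' : Q} {g : G}

/-- The elements below `q` on which the equivariant labelling defines a map to the join. -/
def below (q : Q) : Set Q := {r | r ≤ q ∧ D.rank r < m}

theorem below_subset (q : Q) : D.below q ⊆ Set.Iic q := fun _ hr => hr.1

variable [Fintype Q]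

theorem mapsTo_inv_smul_Iic (D : ColouredPoset G Q S m) (h : q' ≤ g • q) : Set.MapsTo (g⁻¹ • ·)
    (orderComplex (Set.Iic q')) (orderComplex (Set.Iic q)) := fun _ hx =>
  smul_mem_orderComplex (fun _ _ => D.smul_le_smul g⁻¹) (fun r hr => by
    simpa only [Set.mem_Iic, inv_smul_smul] using D.smul_le_smul g⁻¹ (hr.trans h)) hx

theorem mapsTo_inv_smul_below (h : q' ≤ g • q) : Set.MapsTo (g⁻¹ • ·)
    (orderComplex (D.below q')) (orderComplex (D.below q)) := fun _ hx =>
  smul_mem_orderComplex (fun _ _ => D.smul_le_smul g⁻¹) (fun r hr => by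
    have hle := D.smul_le_smul g⁻¹ (hr.1.trans h)
    rw [inv_smul_smul] at hle
    exact ⟨hle, (D.rank_smul g⁻¹ r).trans_lt hr.2⟩) hx

variable [Fintype G]

theorem deform_eq_smul_inv_smul (g : G) (s : S) (τ : ℝ) (x : Q → ℝ) :
    D.deform s τ x = g • D.deform (g⁻¹ • s) τ (g⁻¹ • x) := by
  rw [← D.deform_smul, smul_inv_smul, smul_inv_smul]

variable {D} {E E' : (Q → ℝ) → Fin (m + 1) × G → ℝ}

/-- The continuous maps on the complex of elements below `q` which extend `labelMap` and the maps
`L q'` given on the complexes of elements below `q'`, for `q' ≤ q` of rank `m`. -/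
structure IsCompatible (D : ColouredPoset G Q S m) (L : Q → (Q → ℝ) → Fin (m + 1) × G → ℝ) (q : Q)
    (E : (Q → ℝ) → Fin (m + 1) × G → ℝ) : Prop where
  exists_continuousMap : ∃ F : C(orderComplex (Set.Iic q), discreteJoin (Fin (m + 1)) G),
    ∀ x, (F x).1 = E x
  eqOn_below : Set.EqOn E (FunOnFinite.linearMap ℝ ℝ D.labelVertex) (orderComplex (D.below q))
  eqOn_Iic : ∀ q' ≤ q, D.rank q' = m → Set.EqOn E (L q') (orderComplex (Set.Iic q'))

variable {L : Q → (Q → ℝ) → Fin (m + 1) × G → ℝ}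

theorem IsCompatible.mapsTo (hE : D.IsCompatible L q E) :
    Set.MapsTo E (orderComplex (Set.Iic q)) (discreteJoin (Fin (m + 1)) G) := fun x hx => by
  obtain ⟨F, hF⟩ := hE.exists_continuousMap
  exact hF ⟨x, hx⟩ ▸ (F ⟨x, hx⟩).2

theorem IsCompatible.continuousOn (hE : D.IsCompatible L q E) :
    ContinuousOn E (orderComplex (Set.Iic q)) := by
  obtain ⟨F, hF⟩ := hE.exists_continuousMap
  exact continuousOn_iff_continuous_domRestrict.2
    ((continuous_subtype_val.comp F.continuous).congr hF)

theorem IsCompatible.smul (hE : D.IsCompatible L q E)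
    (hL : ∀ (g : G) q x, L (g • q) (g • x) = g • L q x) (g : G) :
    D.IsCompatible L (g • q) fun x => g • E (g⁻¹ • x) where
  exists_continuousMap := by
    obtain ⟨F, hF⟩ := hE.exists_continuousMap
    exact ⟨conj g (D.mapsTo_inv_smul_Iic le_rfl) F, fun x => congrArg (g • ·) (hF _)⟩
  eqOn_below x hx := by
    rw [linearMap_eq_smul_inv_smul (D.labelVertex_smul g) x]
    exact congrArg (g • ·) (hE.eqOn_below (D.mapsTo_inv_smul_below le_rfl hx))
  eqOn_Iic q' hq' hrank x hx := by
    have hle := D.smul_le_smul g⁻¹ hq'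
    rw [inv_smul_smul] at hle
    have hx' := D.mapsTo_inv_smul_Iic (q := g⁻¹ • q') (smul_inv_smul g q').ge hx
    refine (congrArg (g • ·) (hE.eqOn_Iic _ hle ((D.rank_smul _ _).trans hrank) hx')).trans ?_
    change g • L (g⁻¹ • q') (g⁻¹ • x) = L q' x
    rw [← hL, smul_inv_smul, smul_inv_smul]

theorem IsCompatible.exists_eqOn {q₁ : Q} (hE : D.IsCompatible L q E) (hq₁ : q₁ ≤ q)
    (hrank : D.rank q₁ = m) (K : C(I × orderComplex (Set.Iic q₁), discreteJoin (Fin (m + 1)) G))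
    (hK_zero : ∀ x, (K (0, x)).1 = L q₁ x) (hK_one : ∀ x, (K (1, x)).1 = E' x)
    (hK_below : ∀ t x, x.1 ∈ orderComplex (D.below q₁) →
      (K (t, x)).1 = FunOnFinite.linearMap ℝ ℝ D.labelVertex x.1) :
    ∃ E'', (∃ F : C(orderComplex (Set.Iic q), discreteJoin (Fin (m + 1)) G), ∀ x, (F x).1 = E'' x) ∧
      Set.EqOn E'' E {x ∈ orderComplex (Set.Iic q) | x q₁ = 0} ∧
      Set.EqOn E'' E' (orderComplex (Set.Iic q₁)) := by
  obtain ⟨F, hF⟩ := hE.exists_continuousMap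
  have hsubset : Set.Iic q₁ ⊆ Set.Iic q := Set.Iic_subset_Iic.2 hq₁
  have hzero : ∀ x ∈ orderComplex (Set.Iic q₁), x q₁ = 0 → x ∈ orderComplex (D.below q₁) :=
    fun x hx hxq₁ => ⟨hx.1, fun r hr => ⟨hx.2.1 hr, (D.rank_strictMono
      ((hx.2.1 hr).lt_of_ne (by rintro rfl; exact hr hxq₁))).trans_eq hrank⟩, hx.2.2⟩
  have hK_base : ∀ t (x : orderComplex (Set.Iic q₁)), t = 0 ∨ x.1 q₁ = 0 →
      K (t, x) = F (orderComplex.inclusion hsubset x) := fun t x htx => by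
    refine Subtype.ext (Eq.trans ?_ (hF _).symm)
    rcases htx with rfl | hxq₁
    · exact (hK_zero x).trans (hE.eqOn_Iic q₁ hq₁ hrank x.2).symm
    · have hx := hzero x.1 x.2 hxq₁
      exact (hK_below t x hx).trans
        (hE.eqOn_below ⟨hx.1, fun r hr => ⟨(hx.2.1 hr).1.trans hq₁, (hx.2.1 hr).2⟩, hx.2.2⟩).symm
  obtain ⟨H, hH_base, hH⟩ := exists_homotopy_comp_eq
    (orderComplex.isClosedEmbedding_inclusion hsubset) (D := {x | x.1 q₁ = 0})
    (isClosed_eq ((continuous_apply q₁).comp continuous_subtype_val) continuous_const)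
    F K.continuous hK_base
  have hext := Subtype.val_injective.extend_apply (fun x => (H (1, x)).1) 0
  refine ⟨_, ⟨⟨fun x => H (1, x), by fun_prop⟩, fun x => (hext x).symm⟩, fun x hx => ?_,
    fun x hx => ?_⟩
  · exact (hext ⟨x, hx.1⟩).trans
      ((congrArg _ (hH_base 1 ⟨x, hx.1⟩ (Or.inr hx.2))).trans (hF ⟨x, hx.1⟩))
  · exact (hext ⟨x, orderComplex_mono hsubset hx⟩).trans
      ((congrArg _ (hH 1 ⟨x, hx⟩)).trans (hK_one ⟨x, hx⟩))

theorem IsCompatible.update [DecidableEq Q] {q₁ : Q} (hE : D.IsCompatible L q E) (hq₁ : q₁ ≤ q)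
    (hrank : D.rank q₁ = m) (K : C(I × orderComplex (Set.Iic q₁), discreteJoin (Fin (m + 1)) G))
    (hK_zero : ∀ x, (K (0, x)).1 = L q₁ x) (hK_one : ∀ x, (K (1, x)).1 = E' x)
    (hK_below : ∀ t x, x.1 ∈ orderComplex (D.below q₁) →
      (K (t, x)).1 = FunOnFinite.linearMap ℝ ℝ D.labelVertex x.1) :
    ∃ E'', D.IsCompatible (Function.update L q₁ E') q E'' := by
  obtain ⟨E'', hF, hE_eq, hE'_eq⟩ := hE.exists_eqOn hq₁ hrank K hK_zero hK_one hK_below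
  refine ⟨E'', hF, fun x hx => ?_, fun q' hq' hrank' => ?_⟩
  · refine (hE_eq ⟨orderComplex_mono (D.below_subset q) hx, ?_⟩).trans (hE.eqOn_below hx)
    exact by_contra fun h => (hx.2.1 h).2.ne hrank
  · rcases eq_or_ne q' q₁ with rfl | hne
    · rwa [Function.update_self]
    · rw [Function.update_of_ne hne]
      refine fun x hx => (hE_eq ⟨orderComplex_mono (Set.Iic_subset_Iic.2 hq') hx, ?_⟩).trans
        (hE.eqOn_Iic q' hq' hrank' hx)
      refine by_contra fun h => hne ?_
      exact ((hx.2.1 h).eq_of_not_lt fun hlt =>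
        (D.rank_strictMono hlt).ne (hrank.trans hrank'.symm)).symm

theorem IsCompatible.eqOn {E : Q → (Q → ℝ) → Fin (m + 1) × G → ℝ}
    (hE : ∀ q, D.IsCompatible L q (E q)) (h : q' ≤ q) :
    Set.EqOn (E q) (E q') (orderComplex (Set.Iic q')) := fun x hx => by
  rcases lt_trichotomy (D.rank q') m with hlt | heq | hgt
  · have hbelow : ∀ r, q' ≤ r → x ∈ orderComplex (D.below r) := fun r hr =>
      ⟨hx.1, fun r' hr' => ⟨(hx.2.1 hr').trans hr,
        (D.rank_strictMono.monotone (hx.2.1 hr')).trans_lt hlt⟩, hx.2.2⟩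
    exact ((hE q).eqOn_below (hbelow q h)).trans ((hE q').eqOn_below (hbelow q' le_rfl)).symm
  · exact ((hE q).eqOn_Iic q' h heq hx).trans ((hE q').eqOn_Iic q' le_rfl heq hx).symm
  · rw [h.eq_of_not_lt fun hlt => ?_]
    exact (hgt.trans_le (Nat.le_of_lt_succ ((D.rank_strictMono hlt).trans_le (D.rank_le q)))).false

variable [Fintype S] {a : S → ℤ}

variable (D) in
/-- The continuous maps `E` on the complex of elements below `q` which extend `labelMap` and, as
such extensions, are the affine combination of the maps `levelMap s`, with coefficients `a s`. -/
def IsLift (a : S → ℤ) (q : Q) (E : (Q → ℝ) → Fin (m + 1) × G → ℝ) : Prop :=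
  ∃ F : C(orderComplex (Set.Iic q), discreteJoin (Fin (m + 1)) G), (∀ x, (F x).1 = E x) ∧
    IsBalanced ⟨_, ContinuousMap.continuous_precomp (orderComplex.inclusion (D.below_subset q))⟩
      (fun s => D.levelMap s (Set.Iic q))
      (fun s => D.deformPath s (D.below_subset q) fun _ hr => hr.2) a F

theorem IsLift.smul (hE : D.IsLift a q E) (ha : ∀ (g : G) s, a (g • s) = a s)
    (h : q' ≤ g • q) : D.IsLift a q' fun x => g • E (g⁻¹ • x) := by
  obtain ⟨F, hF, hbal⟩ := hE
  refine ⟨conj g (D.mapsTo_inv_smul_Iic h) F, fun x => ?_, hbal.map (conj g _)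
    (conj g (D.mapsTo_inv_smul_below h)) (MulAction.toPerm g⁻¹) (fun _ => rfl)
    (fun s => ?_) ?_ (fun s τ => ?_) fun s => (ha g⁻¹ s).symm⟩
  · exact congrArg (g • ·) (hF _)
  · ext x : 2
    change FunOnFinite.linearMap ℝ ℝ (D.levelVertex s) x.1 =
      g • FunOnFinite.linearMap ℝ ℝ (D.levelVertex (g⁻¹ • s)) (g⁻¹ • x.1)
    refine linearMap_eq_smul_inv_smul (fun r => ?_) x.1
    rw [← D.levelVertex_smul, smul_inv_smul]
  · ext x : 2
    exact linearMap_eq_smul_inv_smul (D.labelVertex_smul g) x.1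
  · ext x : 2
    exact D.deform_eq_smul_inv_smul g s τ x

theorem IsLift.mono (hE : D.IsLift a q E) (ha : ∀ (g : G) s, a (g • s) = a s) (h : q' ≤ q) :
    D.IsLift a q' E := by
  simpa only [inv_one, one_smul] using hE.smul ha (g := 1) (h.trans_eq (one_smul G q).symm)

variable (D) in
theorem exists_isLift (hm : 2 ≤ m) (ha : ∑ s, a s = 1) (q : Q) : ∃ E, D.IsLift a q E := by
  have := simplyConnectedSpace_of_contractibleSpace (X := orderComplex (Set.Iic q)) (Λ := G) hm
  obtain ⟨F, hF⟩ := IsBalanced.exists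
    (i := ⟨_, ContinuousMap.continuous_precomp (orderComplex.inclusion (D.below_subset q))⟩)
    (t := fun s => D.levelMap s (Set.Iic q))
    (fun s => D.deformPath s (D.below_subset q) fun _ hr => hr.2) ha
    fun e γ => exists_path_comp_eq (orderComplex.isClosedEmbedding_inclusion _) γ
  exact ⟨Function.extend Subtype.val (fun x => (F x).1) 0, F,
    fun x => (Subtype.val_injective.extend_apply (fun x => (F x).1) 0 x).symm, hF⟩

theorem IsLift.eqOn_below (hE : D.IsLift a q E) :
    Set.EqOn E (FunOnFinite.linearMap ℝ ℝ D.labelVertex) (orderComplex (D.below q)) := by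
  obtain ⟨F, hF, hFu, -⟩ := hE
  exact fun x hx => (hF ⟨x, orderComplex_mono (D.below_subset q) hx⟩).symm.trans
    (congrArg (fun f => (f ⟨x, hx⟩).1) hFu.symm)

theorem IsLift.isCompatible (hE : D.IsLift a q E) : D.IsCompatible (fun _ => E) q E where
  exists_continuousMap := hE.imp fun _ hF => hF.1
  eqOn_below := hE.eqOn_below
  eqOn_Iic _ _ _ := Set.eqOn_refl _ _

end

section

variable {G S : Type*} {Q : Type} [Group G] [PartialOrder Q] [MulAction G Q] [MulAction G S]
  {m : ℕ} {D : ColouredPoset G Q S m} [Fintype Q] [Fintype G] [Fintype S] {a : S → ℤ}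

theorem IsLift.exists_homotopy {q : Q} {E E' : (Q → ℝ) → Fin (m + 1) × G → ℝ}
    (hm : 2 ≤ m) (ha : ∑ s, a s = 1) (hE : D.IsLift a q E) (hE' : D.IsLift a q E') :
    ∃ K : C(I × orderComplex (Set.Iic q), discreteJoin (Fin (m + 1)) G),
      (∀ x, (K (0, x)).1 = E x) ∧ (∀ x, (K (1, x)).1 = E' x) ∧
      ∀ t x, x.1 ∈ orderComplex (D.below q) →
        (K (t, x)).1 = FunOnFinite.linearMap ℝ ℝ D.labelVertex x.1 := by
  obtain ⟨F, hF, hbal⟩ := hE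
  obtain ⟨F', hF', hbal'⟩ := hE'
  have := simplyConnectedSpace_of_contractibleSpace (X := orderComplex (Set.Iic q)) (Λ := G) hm
  obtain ⟨hFu, -⟩ := id hbal
  obtain ⟨hFu', -⟩ := id hbal'
  obtain ⟨γ, -, hγ⟩ := exists_homotopic_comp_eq (orderComplex.isClosedEmbedding_inclusion _)
    (PathConnectedSpace.somePath F F') (hbal.homotopic ha
      (trans_homotopic_trans_of_rank_lt D.rank_strictMono hm fun _ hr => hr.2) hbal' _
      hFu.symm hFu'.symm)
  refine ⟨γ.toContinuousMap.uncurry, fun x => ?_, fun x => ?_, fun t x hx => ?_⟩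
  · exact (congrArg (fun f => (f x).1) γ.source).trans (hF x)
  · exact (congrArg (fun f => (f x).1) γ.target).trans (hF' x)
  · exact congrArg (fun f => (f ⟨x, hx⟩).1) (hγ t)

theorem exists_isCompatible (hm : 2 ≤ m) (ha : ∑ s, a s = 1)
    (ha_smul : ∀ (g : G) s, a (g • s) = a s) {L : Q → (Q → ℝ) → Fin (m + 1) × G → ℝ}
    (hL : ∀ q, D.IsLift a q (L q)) (q : Q) : ∃ E, D.IsCompatible L q E := by
  classical
  suffices h : ∀ T : Finset Q, ∃ E, D.IsCompatible (T.piecewise L fun _ => L q) q E by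
    simpa only [Finset.piecewise_univ] using h Finset.univ
  intro T
  induction T using Finset.induction_on with
  | empty => exact ⟨L q, by simpa only [Finset.piecewise_empty] using (hL q).isCompatible⟩
  | insert q₁ T hq₁T ih =>
    obtain ⟨E, hE⟩ := ih
    rw [Finset.piecewise_insert]
    by_cases hq₁ : q₁ ≤ q ∧ D.rank q₁ = m
    · obtain ⟨K, hK_zero, hK_one, hK_below⟩ :=
        ((hL q).mono ha_smul hq₁.1).exists_homotopy hm ha (hL q₁)
      refine hE.update hq₁.1 hq₁.2 K (fun x => ?_) hK_one hK_below
      rw [Finset.piecewise_eq_of_notMem _ _ _ hq₁T, hK_zero]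
    · refine ⟨E, hE.1, hE.2, fun q' hq' hrank => ?_⟩
      rw [Function.update_of_ne (by rintro rfl; exact hq₁ ⟨hq', hrank⟩)]
      exact hE.3 q' hq' hrank

theorem exists_equivariant_continuousMap (D : ColouredPoset G Q S m) (hm : 2 ≤ m)
    (ha : ∑ s, a s = 1) (ha_smul : ∀ (g : G) s, a (g • s) = a s) :
    ∃ Ψ : C(orderComplex (Set.univ : Set Q), discreteJoin (Fin (m + 1)) G),
      ∀ (g : G) x y, y.1 = g • x.1 → (Ψ y).1 = g • (Ψ x).1 := by
  obtain ⟨L, hL, hL_smul⟩ := exists_equivariant_family D.label_smul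
    (fun g q E hE => hE.smul ha_smul le_rfl) (D.exists_isLift hm ha)
  obtain ⟨E, hE, hE_smul⟩ := exists_equivariant_family D.label_smul
    (fun g q E hE => hE.smul hL_smul g) (exists_isCompatible hm ha ha_smul hL)
  obtain ⟨Ψ, hΨ, hΨE⟩ := exists_continuous_orderComplex
    (fun q => (hE q).continuousOn) fun q q' hq' => IsCompatible.eqOn hE hq'
  have hmem : ∀ x, Ψ x ∈ discreteJoin (Fin (m + 1)) G := fun x => by
    obtain ⟨q, -, hq⟩ := exists_mem_orderComplex_Iic x.2
    rw [hΨE q x hq]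
    exact (hE q).mapsTo hq
  refine ⟨⟨fun x => ⟨Ψ x, hmem x⟩, hΨ.subtype_mk hmem⟩, fun g x y hxy => ?_⟩
  obtain ⟨q, -, hq⟩ := exists_mem_orderComplex_Iic x.2
  have hgq : y.1 ∈ orderComplex (Set.Iic (g • q)) := by
    rw [hxy]
    exact smul_mem_orderComplex (P' := Set.Iic (g • q)) (fun _ _ => D.smul_le_smul g)
      (fun r hr => D.smul_le_smul g hr) hq
  change Ψ y = g • Ψ x
  rw [hΨE q x hq, hΨE _ y hgq, hxy, hE_smul]

end

end ColouredPoset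

end EquivariantMap

/-! ### The coloured poset of strata -/

section Strata

attribute [local instance] joinAction

variable {n m : ℕ}

theorem smul_mem_eq (g : Equiv.Perm (Fin n)) (T : properSubsets n) :
    (fun i => i ∈ (g • T).1) = g • fun i => i ∈ T.1 :=
  funext fun _ => propext Finset.inv_smul_mem_iff.symm

namespace Stratum

theorem colourRank_properSubset_le (T : properSubsets (m + 2)) (q : Stratum (m + 2)) :
    q.colourRank (fun i => i ∈ T.1) ≤ m := by
  obtain ⟨i, hi⟩ := T.2.1
  obtain ⟨j, hj⟩ : ∃ j, j ∉ T.1 := by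
    simpa only [ne_eq, Finset.eq_univ_iff_forall, not_forall] using T.2.2
  have hij : i ≠ j := by
    rintro rfl
    exact hj hi
  have hinj : Set.InjOn (fun i => i ∈ T.1) {i, j} := by
    rw [Set.injOn_pair]
    exact fun h => absurd (h ▸ hi) hj
  have hle := q.colourRank_add_ncard_le hinj
  rwa [Set.ncard_pair hij, Nat.add_le_add_iff_right] at hle

/-- The strata of `m + 2` points, labelled by the order of the points, and by the orders in which
the points of a proper subset come last. -/
def colouredPoset (m : ℕ) : ColouredPoset (Equiv.Perm (Fin (m + 2))) (Stratum (m + 2))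
    (properSubsets (m + 2)) m where
  rank := codim
  label := colourPerm fun _ => ()
  level T q := ⟨_, Nat.lt_succ_of_le (colourRank_properSubset_le T q)⟩
  levelLabel T := colourPerm fun i => i ∈ T.1
  smul_le_smul g _ _ := smul_le_smul g
  rank_strictMono := codim_strictMono
  rank_le := codim_le
  level_le_rank T q := colourRank_le_codim _ q
  levelLabel_eq T _ _ hq hc := colourPerm_eq hq (congrArg Fin.val hc)
  rank_smul g q := colourRank_smul g (fun _ => ()) q
  label_smul g q := colourPerm_smul g (fun _ => ()) q
  level_smul g T q := Fin.ext <| by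
    simp only [smul_mem_eq]
    exact colourRank_smul g _ q
  levelLabel_smul g T q := by
    simp only [smul_mem_eq]
    exact colourPerm_smul g _ q

end Stratum

theorem schwartzGenusLE_of_not_isPrimePow (hm : 2 ≤ m) (h : ¬ IsPrimePow (m + 2)) :
    SchwartzGenusLE (m + 2) (m + 1) := by
  obtain ⟨w, hw⟩ := exists_weights_properSubsets (by omega) h
  obtain ⟨Ψ, hΨ⟩ := (Stratum.colouredPoset m).exists_equivariant_continuousMap hm hw
    fun g T => congrArg w (Finset.card_smul_finset g T.1)
  have hcoord : Continuous fun f => Ψ ⟨_, Stratum.coord_mem_orderComplex f⟩ :=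
    Ψ.continuous.comp (Stratum.continuous_coord.subtype_mk _)
  refine schwartzGenusLE_of_equivariant (continuous_subtype_val.comp hcoord)
    (fun f => (Ψ _).2) fun g f c l => ?_
  have heq := hΨ g ⟨_, Stratum.coord_mem_orderComplex f⟩
    ⟨_, Stratum.coord_mem_orderComplex (configPermMap _ g f)⟩ (Stratum.coord_configPermMap g f)
  refine (congrFun heq (c, g * l)).trans (congrArg (Ψ _).1 ?_)
  exact inv_smul_smul g (c, l)

end Strata

end SchwartzGenus

open SchwartzGenus in
theorem schwartzGenus_lt_general (n : ℕ) (hn : 2 ≤ n) (h : ¬ IsPrimePow n) :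
    SchwartzGenusLE n (n - 1) := by
  obtain rfl | rfl | ⟨m, hm, rfl⟩ : n = 2 ∨ n = 3 ∨ ∃ m, 2 ≤ m ∧ n = m + 2 := by
    by_cases h4 : 4 ≤ n
    · exact Or.inr (Or.inr ⟨n - 2, by omega, by omega⟩)
    · omega
  · exact absurd Nat.prime_two.isPrimePow h
  · exact absurd Nat.prime_three.isPrimePow h
  · exact schwartzGenusLE_of_not_isPrimePow hm h

/-- **Statement 1.** If `n ≥ 2` is neither a prime power nor twice a prime power, then the
Schwartz genus of `q_n : F(ℂ,n) → F(ℂ,n)/Σ_n` is less than `n`: the base admits a cover by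
`n - 1` open sets over each of which the covering is trivial. -/
theorem schwartzGenus_lt (n : ℕ) (hn : 2 ≤ n)
    (h : ∀ p k : ℕ, p.Prime → 1 ≤ k → n ≠ p ^ k ∧ n ≠ 2 * p ^ k) :
    SchwartzGenusLE n (n - 1) := by
  refine schwartzGenus_lt_general n hn fun hpp => ?_
  obtain ⟨p, k, hp, hk, rfl⟩ := (isPrimePow_nat_iff n).1 hpp
  exact (h p k hp hk).1 rfl
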